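/- Fix a ∈ ℤ and set a* = |a|+1 if |a| ≤ 1 and a* = |a| if |a| ≥ 2. For all f ∈ Ḣ^{a*−1}_⋄ and B > 0 there exists C = C(ν, T, ‖f‖_{Ḣ^{a*−1}}, a, B) > 0 such that for all θ ∈ Ḣ^{a*}_⋄ with ‖θ‖_{Ḣ^{a*}} ≤ B and all ξ ∈ Ḣ^a_⋄, the linearization of the Navier–Stokes flow satisfies the stability estimate ‖ξ‖²_{Ḣ^a} ≤ C ∫₀ᵀ ‖𝕀_θ[ξ](t)‖²_{Ḣ^{a+1}} dt. -/

import Mathlib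

open MeasureTheory Set
open scoped BigOperators

noncomputable section

namespace NS2D

/-- Nonzero Fourier frequencies of the 2D torus `Ω = 𝕋²`. -/
def Freq : Type := {k : ℤ × ℤ // k ≠ 0}

/-- Squared Euclidean modulus `|k|²` of a frequency. -/
def knormSq (k : Freq) : ℝ := (k.1.1 : ℝ) ^ 2 + (k.1.2 : ℝ) ^ 2

/-- Eigenvalue `λ_k = 4π²|k|²` of the periodic Laplacian `−Δ`. -/
def lam (k : Freq) : ℝ := 4 * Real.pi ^ 2 * knormSq k

/-- A divergence-free mean-zero vector field `u ∈ Ḣ_⋄` (or, more generally, an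
element of the scale `Ḣ^α_⋄`) on the torus is represented by its Fourier
coefficients `c k` along the orthonormal basis
`e_k(x) = |k|⁻¹ (k₂, −k₁) exp(2πi k·x)` of divergence-free fields. -/
abbrev Coef : Type := Freq → ℂ

/-- Negation of a frequency. -/
def fneg (k : Freq) : Freq := ⟨-k.1, neg_ne_zero.mpr k.2⟩

/-- The conjugacy condition expressing that the coefficients `c` represent a
real-valued vector field (note `e_{−k} = − conj e_k`). -/
def IsReal (c : Coef) : Prop := ∀ k, c (fneg k) = - (starRingEnd ℂ) (c k)

/-- Squared homogeneous Sobolev norm `‖·‖²_{Ḣ^α} = Σ_k λ_k^α |c k|²`. -/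
def hSq (α : ℝ) (c : Coef) : ℝ := ∑' k, lam k ^ α * ‖c k‖ ^ 2

/-- Homogeneous Sobolev norm `‖·‖_{Ḣ^α}`. -/
def hN (α : ℝ) (c : Coef) : ℝ := Real.sqrt (hSq α c)

/-- Finiteness of the `Ḣ^α`-norm. -/
def FinH (α : ℝ) (c : Coef) : Prop := Summable fun k => lam k ^ α * ‖c k‖ ^ 2

/-- Membership in `Ḣ^α_⋄` (real-valued field with finite `Ḣ^α`-norm). -/
def MemH (α : ℝ) (c : Coef) : Prop := IsReal c ∧ FinH α c

/-- Membership in `Ḣ^∞_⋄ = C^∞(Ω)² ∩ Ḣ_⋄`: all Sobolev norms are finite. -/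
def MemHinf (c : Coef) : Prop := ∀ α : ℝ, MemH α c

/-- Real `Ḣ^α` inner product `⟨·,·⟩_{Ḣ^α}` (for real-valued fields). -/
def hInner (α : ℝ) (c d : Coef) : ℝ := ∑' k, lam k ^ α * (c k * (starRingEnd ℂ) (d k)).re

/-- The `L²` inner product. -/
def innerC (c d : Coef) : ℂ := ∑' k, c k * (starRingEnd ℂ) (d k)

/-- The unit vector `(k₂, −k₁)/|k|` spanning the divergence-free direction at
frequency `k`. -/
def evec (k : Freq) : ℝ × ℝ :=
  ((k.1.2 : ℝ) / Real.sqrt (knormSq k), -((k.1.1 : ℝ)) / Real.sqrt (knormSq k))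

/-- Euclidean dot product on `ℝ²`. -/
def dotR (a b : ℝ × ℝ) : ℝ := a.1 * b.1 + a.2 * b.2

/-- A frequency as a real vector. -/
def fvec (k : Freq) : ℝ × ℝ := ((k.1.1 : ℝ), (k.1.2 : ℝ))

/-- Fourier coefficients (along the basis `e_k`) of the Leray-projected
transport nonlinearity `B[u,v] = P[(u·∇)v]`:
`(B[u,v])^(k) · ē_k = 2πi Σ_{m+n=k, n≠0} c_m d_n (e_m·n)(e_n·e_k)`. -/
def Bc (c d : Coef) : Coef := fun k =>
  (((2 * Real.pi : ℝ) : ℂ) * Complex.I) *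
    ∑' m : Freq,
      if h : k.1 - m.1 ≠ 0 then
        c m * d ⟨k.1 - m.1, h⟩ *
          (((dotR (evec m) (fvec ⟨k.1 - m.1, h⟩) *
            dotR (evec ⟨k.1 - m.1, h⟩) (evec k) : ℝ)) : ℂ)
      else 0

/-- The Laplacian `Δ` acting on the scale: `(Δu)^(k) = −λ_k û(k)`. -/
def lapC (c : Coef) : Coef := fun k => -((lam k : ℝ) : ℂ) * c k

/-- Continuity of a trajectory `t ↦ u(t)`, `t ∈ [0,T]`, for the `Ḣ^α`-norm:
`u ∈ C([0,T], Ḣ^α_⋄)`. -/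
def ContH (α : ℝ) (T : ℝ) (u : ℝ → Coef) : Prop :=
  ∀ t ∈ Icc (0:ℝ) T, ∀ ε > 0, ∃ δ > 0, ∀ s ∈ Icc (0:ℝ) T,
    |s - t| < δ → hN α (u s - u t) < ε

/-- Membership `u ∈ L²([0,T], Ḣ^α_⋄)`. -/
def MemL2H (α : ℝ) (T : ℝ) (u : ℝ → Coef) : Prop :=
  (∀ t ∈ Ioc (0:ℝ) T, MemH α (u t)) ∧
    IntegrableOn (fun t => hSq α (u t)) (Ioc 0 T)

/-- `u` is a strong solution on `[0,T]` of the (Leray-projected) periodic 2D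
Navier–Stokes equations `du/dt + νAu + B[u,u] = f`, `u(0) = θ`, posed in `Ḣ_⋄`:
the Fourier coefficients satisfy the corresponding system of ODEs on `(0,T]`,
the trajectory is continuous into `Ḣ¹_⋄` (in particular at `t = 0`), and lies
in `L²([0,T], Ḣ²_⋄)`. -/
structure IsNSSol (ν : ℝ) (f : Coef) (T : ℝ) (θ : Coef) (u : ℝ → Coef) : Prop where
  init : u 0 = θ
  real : ∀ t ∈ Icc (0:ℝ) T, IsReal (u t)
  deriv : ∀ (k : Freq), ∀ t ∈ Ioc (0:ℝ) T,
    HasDerivAt (fun s => u s k)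
      (f k - ((ν * lam k : ℝ) : ℂ) * u t k - Bc (u t) (u t) k) t
  contH1 : ContH 1 T u
  memL2H2 : MemL2H 2 T u

/-- `U` solves the linear parabolic equation
`dU/dt − νΔU + B[u₀, U] + B[U, u₁] = g`, `U(0) = ξ`, on `[0,T]`. -/
structure IsLinPSol (ν : ℝ) (u₀ u₁ : ℝ → Coef) (g : ℝ → Coef) (T : ℝ) (ξ : Coef)
    (U : ℝ → Coef) : Prop where
  init : U 0 = ξ
  real : ∀ t ∈ Icc (0:ℝ) T, IsReal (U t)
  deriv : ∀ (k : Freq), ∀ t ∈ Ioc (0:ℝ) T,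
    HasDerivAt (fun s => U s k)
      (g t k - ((ν * lam k : ℝ) : ℂ) * U t k - Bc (u₀ t) (U t) k - Bc (U t) (u₁ t) k) t

/-- `U = 𝕀_θ[ξ]` solves the linearisation of Navier–Stokes along the
trajectory `u₀`: `dU/dt − νΔU + B[u₀,U] + B[U,u₀] = 0`, `U(0) = ξ`. -/
def IsLinSol (ν : ℝ) (u₀ : ℝ → Coef) (T : ℝ) (ξ : Coef) (U : ℝ → Coef) : Prop :=
  IsLinPSol ν u₀ u₀ (fun _ => 0) T ξ U

/-- The heat semigroup `S_t = e^{νtΔ}` on the scale `Ḣ^α_⋄`. -/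
def heatS (ν t : ℝ) (c : Coef) : Coef := fun k =>
  ((Real.exp (-(ν * lam k * t)) : ℝ) : ℂ) * c k

/-- Duhamel representation of the solution of the periodic heat equation
`du/dt − νΔu = g`, `u(0) = h`. -/
def heatSol (ν : ℝ) (g : ℝ → Coef) (h : Coef) : ℝ → Coef := fun t k =>
  ((Real.exp (-(ν * lam k * t)) : ℝ) : ℂ) *
    (h k + ∫ s in (0:ℝ)..t, ((Real.exp (ν * lam k * s) : ℝ) : ℂ) * g s k)

/-- Real-linearity of a map on the coefficient space. -/
def IsLinMap (Λ : Coef → Coef) : Prop :=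
  (∀ c d, Λ (c + d) = Λ c + Λ d) ∧ ∀ (r : ℝ) (c : Coef), Λ (r • c) = r • Λ c

/-- `Λ` defines a compact (linear) operator `Ḣ^α_⋄ → Ḣ^β_⋄`: it is linear,
maps `Ḣ^α_⋄` into `Ḣ^β_⋄`, and the image of the `Ḣ^α`-unit ball is totally
bounded for the `Ḣ^β`-norm. -/
def IsCompactOp (α β : ℝ) (Λ : Coef → Coef) : Prop :=
  IsLinMap Λ ∧ (∀ c, MemH α c → MemH β (Λ c)) ∧
    ∀ ε > 0, ∃ S : Finset Coef, ∀ c, MemH α c → hN α c ≤ 1 →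
      ∃ s ∈ S, hN β (Λ c - s) < ε

/-- The index `a* = |a|+1` if `|a| ≤ 1`, `a* = |a|` if `|a| ≥ 2`. -/
def astar (a : ℤ) : ℤ := if |a| ≤ 1 then |a| + 1 else |a|

/-- `i`-th component of the unit vector `evec k`. -/
def evecC (i : Fin 2) (k : Freq) : ℝ := if i = 0 then (evec k).1 else (evec k).2

/-- Fourier coefficients (over all of `ℤ²`) of the scalar component `u_i` of a
divergence-free field with coefficients `c`. -/
def compCoef (i : Fin 2) (c : Coef) : ℤ × ℤ → ℂ := fun n =>
  if h : n ≠ 0 then c ⟨n, h⟩ * ((evecC i ⟨n, h⟩ : ℝ) : ℂ) else 0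

/-- Convolution: Fourier coefficients of a pointwise product of two scalar
functions. -/
def convC (F G : ℤ × ℤ → ℂ) : ℤ × ℤ → ℂ := fun n => ∑' m : ℤ × ℤ, F m * G (n - m)

/-- Squared homogeneous Sobolev norm of a scalar function given by its Fourier
coefficients over `ℤ²`. -/
def hSqScalar (α : ℝ) (F : ℤ × ℤ → ℂ) : ℝ := ∑' k : Freq, lam k ^ α * ‖F k.1‖ ^ 2

/-- `‖u vᵀ‖²_{Ḣ^α} = Σ_{i,j=1}^2 ‖u_i v_j‖²_{Ḣ^α}`. -/
def hSqMat (α : ℝ) (c d : Coef) : ℝ :=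
  ∑ i : Fin 2, ∑ j : Fin 2, hSqScalar α (convC (compCoef i c) (compCoef j d))

/-- The character `exp(2πi k·x)`. -/
def efun (k : Freq) (x : ℝ × ℝ) : ℂ :=
  Complex.exp ((((2 * Real.pi : ℝ)) : ℂ) * Complex.I *
    ((k.1.1 : ℂ) * (x.1 : ℂ) + (k.1.2 : ℂ) * (x.2 : ℂ)))

/-- Pointwise evaluation of the `i`-th component of the field. -/
def evalComp (i : Fin 2) (c : Coef) (x : ℝ × ℝ) : ℂ :=
  ∑' k, c k * ((evecC i k : ℝ) : ℂ) * efun k x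

/-- Supremum norm (`C⁰`-norm) of the field. -/
def c0N (c : Coef) : ℝ := ⨆ x : ℝ × ℝ, max ‖evalComp 0 c x‖ ‖evalComp 1 c x‖

/-- The partial derivative `∂_j` acting on divergence-free fields. -/
def pderiv (j : Fin 2) (c : Coef) : Coef := fun k =>
  (((2 * Real.pi : ℝ) : ℂ) * Complex.I) *
    (if j = 0 then ((k.1.1 : ℤ) : ℂ) else ((k.1.2 : ℤ) : ℂ)) * c k

/-- `C¹`-norm of the field. -/
def c1N (c : Coef) : ℝ := c0N c + c0N (pderiv 0 c) + c0N (pderiv 1 c)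

/-- Norm of the multiplier space `B^ℓ`: `C^ℓ(Ω)²` for `ℓ ≤ 1` and `Ḣ^ℓ` for
`ℓ ≥ 2`. -/
def bN (ℓ : ℕ) (c : Coef) : ℝ :=
  if ℓ = 0 then c0N c else if ℓ = 1 then c1N c else hN (ℓ : ℝ) c

end NS2D

namespace NS2D

/-!
Testing the equation for `U = 𝕀_θ[ξ]` with `(-Δ)^a U` gives
`-d/dt ‖U‖²_{Ḣ^a} = 2ν ‖U‖²_{Ḣ^{a+1}} + 2 ⟨U, B[u,U] + B[U,u]⟩_{Ḣ^a}`.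
The trilinear term is at most `L ‖U‖²_{Ḣ^{a+1}}` when `u` is bounded in `Ḣ^{max(|a|,1)}`, so the
energy at time `0` is at most the energy at time `t` plus a multiple of `∫ ‖U‖²_{Ḣ^{a+1}}`, and
averaging over `t ∈ (0,T]` gives the estimate.

The bound on `u` has to be uniform over the ball of initial values. In `Ḣ¹` it comes from the
cancellation `⟨u, B[u,u]⟩_{Ḣ¹} = 0`, special to dimension two. Each further half derivative
comes from the energy estimate with `B[u,u]` as a force, and regularity `r - 1` of `f` suffices
to reach `Ḣ^r`.

All energy computations are carried out on finite sets of Fourier modes, where the equation is a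
system of ODEs.
-/

section Convolution

open scoped ENNReal

lemma sq_tsum_mul_le {ι : Type*} (x y : ι → ℝ≥0∞) :
    (∑' i, x i * y i) ^ 2 ≤ (∑' i, x i ^ 2) * ∑' i, y i ^ 2 := by
  have tsum_mul_le : ∑' i, x i * y i ≤
      (∑' i, x i ^ 2) ^ (1 / 2 : ℝ) * (∑' i, y i ^ 2) ^ (1 / 2 : ℝ) := by
    rw [ENNReal.tsum_eq_iSup_sum]
    refine iSup_le fun s => (ENNReal.inner_le_Lp_mul_Lq s x y .two_two).trans ?_
    simp only [ENNReal.rpow_two]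
    gcongr <;> exact ENNReal.sum_le_tsum s
  calc (∑' i, x i * y i) ^ 2
      ≤ ((∑' i, x i ^ 2) ^ (1 / 2 : ℝ) * (∑' i, y i ^ 2) ^ (1 / 2 : ℝ)) ^ 2 := by gcongr
    _ = (∑' i, x i ^ 2) * ∑' i, y i ^ 2 := by
      rw [mul_pow, ← ENNReal.rpow_mul_natCast, ← ENNReal.rpow_mul_natCast]
      norm_num

variable {G : Type*} [AddCommGroup G]

/-- Discrete convolution of nonnegative sequences indexed by an abelian group; it dominates the
Fourier coefficients of a product of functions. -/
def seqConv (X Y : G → ℝ≥0∞) (k : G) : ℝ≥0∞ := ∑' m, X m * Y (k - m)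

lemma tsum_sub_left (X : G → ℝ≥0∞) (k : G) : ∑' m, X (k - m) = ∑' m, X m :=
  (Equiv.subLeft k).tsum_eq X

lemma seqConv_comm (X Y : G → ℝ≥0∞) : seqConv X Y = seqConv Y X := by
  ext k
  rw [seqConv, ← tsum_sub_left _ k]
  exact tsum_congr fun m => by rw [sub_sub_cancel, mul_comm]

lemma tsum_seqConv (X Y : G → ℝ≥0∞) : ∑' k, seqConv X Y k = (∑' m, X m) * ∑' n, Y n := by
  simp only [seqConv]
  rw [ENNReal.tsum_comm, ← ENNReal.tsum_mul_right]
  exact tsum_congr fun m =>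
    ENNReal.tsum_mul_left.trans (congrArg (X m * ·) ((Equiv.subRight m).tsum_eq Y))

lemma tsum_mul_seqConv_of_even {X : G → ℝ≥0∞} (hX : ∀ n, X (-n) = X n) (Y Z : G → ℝ≥0∞) :
    ∑' k, Z k * seqConv X Y k = ∑' n, Y n * seqConv Z X n := by
  rw [seqConv_comm X Y]
  simp only [seqConv, ← ENNReal.tsum_mul_left]
  rw [ENNReal.tsum_comm]
  refine tsum_congr fun n => tsum_congr fun k => ?_
  rw [← hX (n - k), neg_sub]
  ring

lemma seqConv_mul_mul_sq_le (X Y P Q : G → ℝ≥0∞) (k : G) :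
    seqConv (X * P) (Y * Q) k ^ 2 ≤ seqConv (X ^ 2) (Y ^ 2) k * seqConv (P ^ 2) (Q ^ 2) k := by
  have hsplit : seqConv (X * P) (Y * Q) k = ∑' m, (X m * Y (k - m)) * (P m * Q (k - m)) :=
    tsum_congr fun m => by simp only [Pi.mul_apply]; ring
  rw [hsplit]
  refine (sq_tsum_mul_le _ _).trans_eq ?_
  simp only [seqConv, Pi.pow_apply, mul_pow]

lemma tsum_mul_seqConv_mul_mul_sq_le {V P Q : G → ℝ≥0∞} {K : ℝ≥0∞}
    (hK : ∀ k, V k * seqConv (P ^ 2) (Q ^ 2) k ≤ K) (X Y : G → ℝ≥0∞) :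
    ∑' k, V k * seqConv (X * P) (Y * Q) k ^ 2 ≤ K * ((∑' n, X n ^ 2) * ∑' n, Y n ^ 2) := by
  calc ∑' k, V k * seqConv (X * P) (Y * Q) k ^ 2
      ≤ ∑' k, V k * (seqConv (X ^ 2) (Y ^ 2) k * seqConv (P ^ 2) (Q ^ 2) k) := by
        gcongr with k; exact seqConv_mul_mul_sq_le X Y P Q k
    _ = ∑' k, V k * seqConv (P ^ 2) (Q ^ 2) k * seqConv (X ^ 2) (Y ^ 2) k :=
        tsum_congr fun k => by ring
    _ ≤ ∑' k, K * seqConv (X ^ 2) (Y ^ 2) k := by gcongr with k; exact hK k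
    _ = K * ((∑' n, X n ^ 2) * ∑' n, Y n ^ 2) := by
        rw [ENNReal.tsum_mul_left, tsum_seqConv]; rfl

end Convolution

section Lattice

/-- The symbol `4π²|n|²` of `−Δ` on all of `ℤ²`; on nonzero frequencies it is `lam`. -/
def latLam (n : ℤ × ℤ) : ℝ := 4 * Real.pi ^ 2 * ((n.1 : ℝ) ^ 2 + (n.2 : ℝ) ^ 2)

lemma latLam_nonneg (n : ℤ × ℤ) : 0 ≤ latLam n := by unfold latLam; positivity

lemma one_le_four_mul_pi_sq : 1 ≤ 4 * Real.pi ^ 2 := by nlinarith [Real.pi_gt_three]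

lemma one_le_latLam {n : ℤ × ℤ} (hn : n ≠ 0) : 1 ≤ latLam n := by
  have hsq : 1 ≤ n.1 ^ 2 + n.2 ^ 2 := by
    have : n.1 ≠ 0 ∨ n.2 ≠ 0 := by simpa [Prod.ext_iff, or_iff_not_imp_left] using hn
    rcases this with h | h <;> nlinarith [sq_nonneg n.1, sq_nonneg n.2, sq_pos_of_ne_zero h]
  exact one_le_mul_of_one_le_of_one_le one_le_four_mul_pi_sq (by exact_mod_cast hsq)

lemma latLam_pos {n : ℤ × ℤ} (hn : n ≠ 0) : 0 < latLam n := one_pos.trans_le (one_le_latLam hn)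

lemma latLam_neg (n : ℤ × ℤ) : latLam (-n) = latLam n := by simp [latLam]

lemma latLam_add_le (m n : ℤ × ℤ) : latLam (m + n) ≤ 4 * max (latLam m) (latLam n) := by
  have parallelogram : latLam (m + n) ≤ 2 * (latLam m + latLam n) := by
    simp only [latLam, Prod.fst_add, Prod.snd_add, Int.cast_add]
    have hπ := zero_le_one.trans one_le_four_mul_pi_sq
    nlinarith [mul_nonneg hπ (sq_nonneg ((m.1 : ℝ) - n.1)),
      mul_nonneg hπ (sq_nonneg ((m.2 : ℝ) - n.2))]
  linarith [le_max_left (latLam m) (latLam n), le_max_right (latLam m) (latLam n)]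

lemma norm_sq_le_latLam (x : Fin 2 → ℤ) : ‖x‖ ^ 2 ≤ latLam (x 0, x 1) := by
  have hnorm : ‖x‖ ≤ √((x 0 : ℝ) ^ 2 + (x 1 : ℝ) ^ 2) := by
    refine (pi_norm_le_iff_of_nonneg (Real.sqrt_nonneg _)).2 (Fin.forall_fin_two.2 ⟨?_, ?_⟩) <;>
      rw [Int.norm_eq_abs] <;> refine Real.abs_le_sqrt ?_
    exacts [le_add_of_nonneg_right (sq_nonneg _), le_add_of_nonneg_left (sq_nonneg _)]
  calc ‖x‖ ^ 2 ≤ (x 0 : ℝ) ^ 2 + (x 1 : ℝ) ^ 2 :=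
        (Real.le_sqrt (norm_nonneg x) (by positivity)).1 hnorm
    _ ≤ latLam (x 0, x 1) := le_mul_of_one_le_left (by positivity) one_le_four_mul_pi_sq

end Lattice

section Weights

open scoped ENNReal NNReal

/-- The Fourier multiplier `(4π²|n|²)^s` of `(−Δ)^s` on mean-zero functions, hence set to `0` at
the zero frequency. -/
def weight (s : ℝ) (n : ℤ × ℤ) : ℝ≥0∞ := if n = 0 then 0 else ENNReal.ofReal (latLam n ^ s)

@[simp] lemma weight_zero_right (s : ℝ) : weight s 0 = 0 := if_pos rfl

lemma weight_of_ne_zero (s : ℝ) {n : ℤ × ℤ} (hn : n ≠ 0) :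
    weight s n = ENNReal.ofReal (latLam n ^ s) := if_neg hn

lemma weight_zero_left {n : ℤ × ℤ} (hn : n ≠ 0) : weight 0 n = 1 := by
  simp [weight_of_ne_zero 0 hn]

lemma weight_mul (s r : ℝ) : weight s * weight r = weight (s + r) := by
  ext n
  obtain rfl | hn := eq_or_ne n 0
  · simp
  · rw [Pi.mul_apply, weight_of_ne_zero _ hn, weight_of_ne_zero _ hn, weight_of_ne_zero _ hn,
      ← ENNReal.ofReal_mul (Real.rpow_nonneg (latLam_nonneg n) s), Real.rpow_add (latLam_pos hn)]

lemma weight_mul_apply (s r : ℝ) (n : ℤ × ℤ) : weight s n * weight r n = weight (s + r) n :=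
  congrFun (weight_mul s r) n

lemma weight_half_sq (s : ℝ) : weight (s / 2) ^ 2 = weight s := by
  rw [sq, weight_mul, add_halves]

lemma weight_mono {s r : ℝ} (h : s ≤ r) (n : ℤ × ℤ) : weight s n ≤ weight r n := by
  obtain rfl | hn := eq_or_ne n 0
  · simp
  · rw [weight_of_ne_zero _ hn, weight_of_ne_zero _ hn]
    exact ENNReal.ofReal_le_ofReal (Real.rpow_le_rpow_of_exponent_le (one_le_latLam hn) h)

lemma weight_mul_weight_neg_mul (s : ℝ) {X : ℤ × ℤ → ℝ≥0∞} (hX : X 0 = 0) :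
    weight s * X * weight (-s) = X := by
  ext n
  obtain rfl | hn := eq_or_ne n 0
  · simp [hX]
  · rw [mul_right_comm, weight_mul, add_neg_cancel, Pi.mul_apply, weight_zero_left hn, one_mul]

lemma weight_add_le {α : ℝ} (hα : 0 ≤ α) {m n : ℤ × ℤ} (hm : m ≠ 0) (hn : n ≠ 0) :
    weight α (m + n) ≤ ENNReal.ofReal (4 ^ α) * (weight α m + weight α n) := by
  obtain h | h := eq_or_ne (m + n) 0
  · simp [h]
  have hmax : latLam (m + n) ^ α ≤ 4 ^ α * (latLam m ^ α + latLam n ^ α) := by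
    have hm0 := Real.rpow_nonneg (latLam_nonneg m) α
    have hn0 := Real.rpow_nonneg (latLam_nonneg n) α
    calc latLam (m + n) ^ α ≤ (4 * max (latLam m) (latLam n)) ^ α :=
          Real.rpow_le_rpow (latLam_nonneg _) (latLam_add_le m n) hα
      _ = 4 ^ α * max (latLam m) (latLam n) ^ α :=
          Real.mul_rpow (by norm_num) ((latLam_nonneg m).trans (le_max_left _ _))
      _ ≤ 4 ^ α * (latLam m ^ α + latLam n ^ α) := by
          gcongr
          rcases max_choice (latLam m) (latLam n) with h | h <;> rw [h] <;> linarith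
  rw [weight_of_ne_zero _ h, weight_of_ne_zero _ hm, weight_of_ne_zero _ hn,
    ← ENNReal.ofReal_add (Real.rpow_nonneg (latLam_nonneg m) α)
      (Real.rpow_nonneg (latLam_nonneg n) α), ← ENNReal.ofReal_mul (by positivity)]
  exact ENNReal.ofReal_le_ofReal hmax

lemma weight_neg_le_of_latLam_le {s : ℝ} (hs : 0 ≤ s) {m n : ℤ × ℤ} (hm : m ≠ 0)
    (h : latLam m ≤ latLam n) : weight (-s) n ≤ weight (-s) m := by
  obtain rfl | hn := eq_or_ne n 0
  · simp
  · rw [weight_of_ne_zero _ hm, weight_of_ne_zero _ hn]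
    exact ENNReal.ofReal_le_ofReal
      (Real.rpow_le_rpow_of_nonpos (latLam_pos hm) h (neg_nonpos.2 hs))

lemma weight_neg_mul_weight_neg_le {p q : ℝ} (hp : 0 ≤ p) (hq : 0 ≤ q) (m n : ℤ × ℤ) :
    weight (-p) m * weight (-q) n ≤ weight (-(p + q)) m + weight (-(p + q)) n := by
  obtain rfl | hm := eq_or_ne m 0
  · simp
  obtain rfl | hn := eq_or_ne n 0
  · simp
  rw [neg_add, ← weight_mul_apply, ← weight_mul_apply]
  rcases le_total (latLam m) (latLam n) with h | h
  · exact (mul_le_mul_right (weight_neg_le_of_latLam_le hq hm h) _).trans le_self_add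
  · exact (mul_le_mul_left (weight_neg_le_of_latLam_le hp hn h) _).trans le_add_self

lemma tsum_weight_neg_ne_top {τ : ℝ} (hτ : 1 < τ) : ∑' n, weight (-τ) n ≠ ⊤ := by
  have hsum := EisensteinSeries.summable_one_div_norm_rpow (k := 2 * τ) (by linarith)
  rw [← (finTwoArrowEquiv ℤ).tsum_eq]
  refine ne_top_of_le_ne_top hsum.tsum_ofReal_ne_top (ENNReal.tsum_le_tsum fun x => ?_)
  obtain rfl | hx := eq_or_ne x 0
  · exact (weight_zero_right _).trans_le zero_le
  have hx' : finTwoArrowEquiv ℤ x ≠ 0 := fun h => hx ((finTwoArrowEquiv ℤ).injective h)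
  rw [weight_of_ne_zero _ hx']
  refine ENNReal.ofReal_le_ofReal ?_
  calc latLam (x 0, x 1) ^ (-τ) ≤ (‖x‖ ^ 2) ^ (-τ) :=
        Real.rpow_le_rpow_of_nonpos (by positivity) (norm_sq_le_latLam x) (by linarith)
    _ = ‖x‖ ^ (-(2 * τ)) := by
        rw [← Real.rpow_natCast, ← Real.rpow_mul (norm_nonneg x)]
        norm_num

lemma seqConv_weight_neg_le {p q : ℝ} (hp : 0 ≤ p) (hq : 0 ≤ q) (k : ℤ × ℤ) :
    seqConv (weight (-p)) (weight (-q)) k ≤ 2 * ∑' n, weight (-(p + q)) n := by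
  calc seqConv (weight (-p)) (weight (-q)) k
      ≤ ∑' m, (weight (-(p + q)) m + weight (-(p + q)) (k - m)) :=
        ENNReal.tsum_le_tsum fun m => weight_neg_mul_weight_neg_le hp hq m (k - m)
    _ = 2 * ∑' n, weight (-(p + q)) n := by rw [ENNReal.tsum_add, tsum_sub_left, two_mul]

lemma weight_mul_seqConv_weight_neg_le {α s r : ℝ} (hα : 0 ≤ α) (hs : α ≤ s) (hr : α ≤ r)
    (k : ℤ × ℤ) : weight α k * seqConv (weight (-s)) (weight (-r)) k ≤
      ENNReal.ofReal (4 ^ α) * (4 * ∑' n, weight (-(s + r - α)) n) := by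
  have hterm : ∀ m, weight α k * (weight (-s) m * weight (-r) (k - m)) ≤
      ENNReal.ofReal (4 ^ α) * (weight (-(s - α)) m * weight (-r) (k - m) +
        weight (-s) m * weight (-(r - α)) (k - m)) := by
    intro m
    obtain rfl | hm := eq_or_ne m 0
    · simp
    obtain hn | hn := eq_or_ne (k - m) 0
    · simp [hn]
    have h := weight_add_le hα hm hn
    rw [add_sub_cancel] at h
    refine (mul_le_mul_left h _).trans_eq ?_
    rw [neg_sub, neg_sub, sub_eq_add_neg α, sub_eq_add_neg α, ← weight_mul_apply,
      ← weight_mul_apply]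
    ring
  calc weight α k * seqConv (weight (-s)) (weight (-r)) k
      ≤ ENNReal.ofReal (4 ^ α) * (seqConv (weight (-(s - α))) (weight (-r)) k +
          seqConv (weight (-s)) (weight (-(r - α))) k) := by
        simp only [seqConv, ← ENNReal.tsum_mul_left, ← ENNReal.tsum_add]
        exact ENNReal.tsum_le_tsum hterm
    _ ≤ ENNReal.ofReal (4 ^ α) * (2 * ∑' n, weight (-(s + r - α)) n +
          2 * ∑' n, weight (-(s + r - α)) n) := by
        gcongr
        · rw [show s + r - α = s - α + r by ring]
          exact seqConv_weight_neg_le (by linarith) (by linarith) k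
        · rw [show s + r - α = s + (r - α) by ring]
          exact seqConv_weight_neg_le (by linarith) (by linarith) k
    _ = ENNReal.ofReal (4 ^ α) * (4 * ∑' n, weight (-(s + r - α)) n) := by ring

end Weights

section SobolevSequences

open scoped ENNReal NNReal

/-- Squared homogeneous `Ḣ^s` norm of a function on the torus, in terms of the moduli `X` of its
Fourier coefficients. -/
def sobSq (s : ℝ) (X : ℤ × ℤ → ℝ≥0∞) : ℝ≥0∞ := ∑' n, weight s n * X n ^ 2

lemma sobSq_mono_left {s r : ℝ} (h : s ≤ r) (X : ℤ × ℤ → ℝ≥0∞) : sobSq s X ≤ sobSq r X := by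
  unfold sobSq
  gcongr
  exact weight_mono h _

lemma sobSq_mono_right (s : ℝ) {X Y : ℤ × ℤ → ℝ≥0∞} (h : X ≤ Y) : sobSq s X ≤ sobSq s Y := by
  unfold sobSq
  gcongr
  exact h _

lemma tsum_weight_half_mul_sq (s : ℝ) (X : ℤ × ℤ → ℝ≥0∞) :
    ∑' n, (weight (s / 2) * X) n ^ 2 = sobSq s X :=
  tsum_congr fun n => by rw [← weight_half_sq s, Pi.mul_apply, mul_pow, Pi.pow_apply]

lemma sobSq_weight_mul (s r : ℝ) (X : ℤ × ℤ → ℝ≥0∞) :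
    sobSq s (weight r * X) = sobSq (s + 2 * r) X := by
  refine tsum_congr fun n => ?_
  rw [Pi.mul_apply, mul_pow, ← mul_assoc, sq (weight r n), ← mul_assoc, weight_mul_apply,
    weight_mul_apply, two_mul, add_assoc]

lemma sq_tsum_weight_mul_le (s r : ℝ) (X Y : ℤ × ℤ → ℝ≥0∞) :
    (∑' n, weight ((s + r) / 2) n * (X n * Y n)) ^ 2 ≤ sobSq s X * sobSq r Y := by
  rw [← tsum_weight_half_mul_sq s, ← tsum_weight_half_mul_sq r]
  refine le_of_eq_of_le (congrArg (· ^ 2) (tsum_congr fun n => ?_)) (sq_tsum_mul_le _ _)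
  rw [add_div, ← weight_mul_apply, Pi.mul_apply, Pi.mul_apply]
  ring

lemma sobSq_sq_le_mul (s r : ℝ) (X : ℤ × ℤ → ℝ≥0∞) :
    sobSq ((s + r) / 2) X ^ 2 ≤ sobSq s X * sobSq r X := by
  simpa only [sobSq, sq] using sq_tsum_weight_mul_le s r X X

lemma exists_sobSq_seqConv_le {α s r : ℝ} (hs : max α 0 ≤ s) (hr : max α 0 ≤ r)
    (h : 1 + max α 0 < s + r) :
    ∃ K : ℝ≥0, ∀ X Y : ℤ × ℤ → ℝ≥0∞, X 0 = 0 → Y 0 = 0 →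
      sobSq α (seqConv X Y) ≤ K * (sobSq s X * sobSq r Y) := by
  have hfin := tsum_weight_neg_ne_top (τ := s + r - max α 0) (by linarith)
  set K := ENNReal.ofReal (4 ^ max α 0) * (4 * ∑' n, weight (-(s + r - max α 0)) n)
  have hK : K ≠ ⊤ := by finiteness
  refine ⟨K.toNNReal, fun X Y hX hY => (sobSq_mono_left (le_max_left α 0) _).trans ?_⟩
  rw [ENNReal.coe_toNNReal hK]
  have hweight : ∀ k, weight (max α 0) k *
      seqConv (weight (-(s / 2)) ^ 2) (weight (-(r / 2)) ^ 2) k ≤ K := by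
    simp only [← neg_div, weight_half_sq]
    exact weight_mul_seqConv_weight_neg_le (le_max_right α 0) hs hr
  have hschur := tsum_mul_seqConv_mul_mul_sq_le hweight (weight (s / 2) * X) (weight (r / 2) * Y)
  rwa [weight_mul_weight_neg_mul _ hX, weight_mul_weight_neg_mul _ hY, tsum_weight_half_mul_sq,
    tsum_weight_half_mul_sq] at hschur

-- The product is too rough to be paired with `Y` directly, so `X` is moved to the other factor.
lemma exists_sq_tsum_weight_mul_seqConv_le_of_le_neg_one {a : ℝ} (ha : a ≤ -1) :
    ∃ K : ℝ≥0, ∀ X Y : ℤ × ℤ → ℝ≥0∞, X 0 = 0 → Y 0 = 0 → (∀ n, X (-n) = X n) →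
      (∑' k, weight (a + 1 / 2) k * (Y k * seqConv X Y k)) ^ 2 ≤
        K * (sobSq (-a) X * sobSq (a + 1) Y ^ 2) := by
  obtain ⟨K, hK⟩ := exists_sobSq_seqConv_le (α := -a - 1) (s := -a) (r := -a)
    (max_le (by linarith) (by linarith)) (max_le (by linarith) (by linarith))
    (by rw [max_eq_left (by linarith)]; linarith)
  refine ⟨K, fun X Y hX hY hXeven => ?_⟩
  set Z := weight (a + 1 / 2) * Y
  have hZ : sobSq (-a) Z = sobSq (a + 1) Y := by
    rw [sobSq_weight_mul]; congr 1; ring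
  have hdual : ∑' k, weight (a + 1 / 2) k * (Y k * seqConv X Y k) =
      ∑' n, weight ((a + 1 + (-a - 1)) / 2) n * (Y n * seqConv Z X n) := by
    simp only [← mul_assoc]
    refine (tsum_mul_seqConv_of_even hXeven Y Z).trans (tsum_congr fun n => ?_)
    obtain rfl | hn := eq_or_ne n 0
    · simp [hY]
    · rw [show (a + 1 + (-a - 1)) / 2 = 0 by ring, weight_zero_left hn, one_mul]
  calc (∑' k, weight (a + 1 / 2) k * (Y k * seqConv X Y k)) ^ 2
      ≤ sobSq (a + 1) Y * sobSq (-a - 1) (seqConv Z X) := by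
        rw [hdual]; exact sq_tsum_weight_mul_le _ _ _ _
    _ ≤ sobSq (a + 1) Y * (K * (sobSq (-a) Z * sobSq (-a) X)) := by
        gcongr; exact hK Z X (by simp [Z]) hX
    _ = K * (sobSq (-a) X * sobSq (a + 1) Y ^ 2) := by rw [hZ]; ring

lemma exists_sq_tsum_weight_mul_seqConv_le_of_neg_one_lt {a s : ℝ} (ha : -1 < a) (hs : 1 ≤ s)
    (has : a ≤ s) : ∃ K : ℝ≥0, ∀ X Y : ℤ × ℤ → ℝ≥0∞, X 0 = 0 → Y 0 = 0 →
      (∑' k, weight (a + 1 / 2) k * (Y k * seqConv X Y k)) ^ 2 ≤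
        K * (sobSq s X * sobSq (a + 1) Y ^ 2) := by
  obtain ⟨K, hK⟩ := exists_sobSq_seqConv_le (α := a) (s := s) (r := a + 1)
    (max_le has (by linarith)) (max_le (by linarith) (by linarith))
    (by rcases max_cases a 0 with ⟨h, -⟩ | ⟨h, -⟩ <;> rw [h] <;> linarith)
  refine ⟨K, fun X Y hX hY => ?_⟩
  calc (∑' k, weight (a + 1 / 2) k * (Y k * seqConv X Y k)) ^ 2
      = (∑' k, weight ((a + 1 + a) / 2) k * (Y k * seqConv X Y k)) ^ 2 := by
        rw [show (a + 1 + a) / 2 = a + 1 / 2 by ring]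
    _ ≤ sobSq (a + 1) Y * sobSq a (seqConv X Y) := sq_tsum_weight_mul_le _ _ _ _
    _ ≤ sobSq (a + 1) Y * (K * (sobSq s X * sobSq (a + 1) Y)) := by
        gcongr; exact hK X Y hX hY
    _ = K * (sobSq s X * sobSq (a + 1) Y ^ 2) := by ring

lemma exists_sq_tsum_weight_mul_seqConv_le (a : ℝ) :
    ∃ K : ℝ≥0, ∀ X Y : ℤ × ℤ → ℝ≥0∞, X 0 = 0 → Y 0 = 0 → (∀ n, X (-n) = X n) →
      (∑' k, weight (a + 1 / 2) k * (Y k * seqConv X Y k)) ^ 2 ≤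
        K * (sobSq (max |a| 1) X * sobSq (a + 1) Y ^ 2) := by
  rcases le_or_gt a (-1) with ha | ha
  · rw [abs_of_neg (by linarith), max_eq_left (by linarith)]
    exact exists_sq_tsum_weight_mul_seqConv_le_of_le_neg_one ha
  · obtain ⟨K, hK⟩ := exists_sq_tsum_weight_mul_seqConv_le_of_neg_one_lt ha
      (le_max_right |a| 1) ((le_abs_self a).trans (le_max_left |a| 1))
    exact ⟨K, fun X Y hX hY _ => hK X Y hX hY⟩

end SobolevSequences

section SobolevScale

open scoped ENNReal NNReal

instance : Countable Freq := inferInstanceAs (Countable {k : ℤ × ℤ // k ≠ 0})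

lemma lam_pos (k : Freq) : 0 < lam k := latLam_pos k.2

lemma weight_freq (s : ℝ) (k : Freq) : weight s k.1 = ENNReal.ofReal (lam k ^ s) :=
  weight_of_ne_zero s k.2

lemma tsum_freq {α : Type*} [AddCommMonoid α] [TopologicalSpace α] {g : ℤ × ℤ → α}
    (hg : g 0 = 0) : ∑' k : Freq, g k.1 = ∑' n, g n :=
  tsum_subtype_eq_of_support_subset (s := {n | n ≠ 0}) fun _ hn h0 => hn (h0 ▸ hg)

/-- Extension of a coefficient sequence to all of `ℤ²`, with vanishing mean. -/
def latCoef (c : Coef) (n : ℤ × ℤ) : ℂ := if h : n ≠ 0 then c ⟨n, h⟩ else 0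

@[simp] lemma latCoef_zero (c : Coef) : latCoef c 0 = 0 := by simp [latCoef]

@[simp] lemma latCoef_freq (c : Coef) (k : Freq) : latCoef c k.1 = c k := dif_pos k.2

lemma latCoef_neg {c : Coef} (hc : IsReal c) (n : ℤ × ℤ) :
    latCoef c (-n) = -starRingEnd ℂ (latCoef c n) := by
  obtain rfl | hn := eq_or_ne n 0
  · simp
  · exact (latCoef_freq c (fneg ⟨n, hn⟩)).trans
      ((hc ⟨n, hn⟩).trans (by rw [← latCoef_freq c ⟨n, hn⟩]))

lemma enorm_latCoef_neg {c : Coef} (hc : IsReal c) (n : ℤ × ℤ) :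
    ‖latCoef c (-n)‖ₑ = ‖latCoef c n‖ₑ := by
  rw [latCoef_neg hc, enorm_neg, ← ofReal_norm, Complex.norm_conj, ofReal_norm]

/-- The squared `Ḣ^s` norm `hSq` with values in `[0, ∞]`, so that it is `∞` rather than `0` outside
the space. -/
def eHSq (s : ℝ) (c : Coef) : ℝ≥0∞ := ∑' k : Freq, ENNReal.ofReal (lam k ^ s * ‖c k‖ ^ 2)

lemma lam_rpow_mul_norm_sq_nonneg (s : ℝ) (c : Coef) (k : Freq) : 0 ≤ lam k ^ s * ‖c k‖ ^ 2 :=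
  mul_nonneg (Real.rpow_nonneg (lam_pos k).le s) (sq_nonneg _)

lemma ofReal_lam_rpow_mul_norm_sq (s : ℝ) (c : Coef) (k : Freq) :
    ENNReal.ofReal (lam k ^ s * ‖c k‖ ^ 2) = weight s k.1 * ‖c k‖ₑ ^ 2 := by
  rw [ENNReal.ofReal_mul (Real.rpow_nonneg (lam_pos k).le s), weight_freq,
    ENNReal.ofReal_pow (norm_nonneg _), ofReal_norm]

lemma eHSq_eq_sobSq (s : ℝ) (c : Coef) : eHSq s c = sobSq s (‖latCoef c ·‖ₑ) := by
  rw [sobSq, ← tsum_freq (by simp)]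
  exact tsum_congr fun k => by rw [ofReal_lam_rpow_mul_norm_sq, latCoef_freq]

lemma eHSq_ne_top_iff {s : ℝ} {c : Coef} : eHSq s c ≠ ⊤ ↔ FinH s c := by
  refine ⟨fun h => (ENNReal.summable_toReal h).congr fun k => ?_, Summable.tsum_ofReal_ne_top⟩
  exact ENNReal.toReal_ofReal (lam_rpow_mul_norm_sq_nonneg s c k)

lemma toReal_eHSq (s : ℝ) (c : Coef) : (eHSq s c).toReal = hSq s c := by
  rw [eHSq, ENNReal.tsum_toReal_eq fun _ => ENNReal.ofReal_ne_top]
  exact tsum_congr fun k => ENNReal.toReal_ofReal (lam_rpow_mul_norm_sq_nonneg s c k)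

lemma FinH.eHSq_eq {s : ℝ} {c : Coef} (hc : FinH s c) : eHSq s c = ENNReal.ofReal (hSq s c) := by
  rw [← toReal_eHSq, ENNReal.ofReal_toReal (eHSq_ne_top_iff.2 hc)]

lemma hSq_nonneg (s : ℝ) (c : Coef) : 0 ≤ hSq s c :=
  tsum_nonneg (lam_rpow_mul_norm_sq_nonneg s c)

lemma eHSq_mono {s r : ℝ} (h : s ≤ r) (c : Coef) : eHSq s c ≤ eHSq r c := by
  simp only [eHSq_eq_sobSq]
  exact sobSq_mono_left h _

lemma FinH.mono {s r : ℝ} (h : s ≤ r) {c : Coef} (hc : FinH r c) : FinH s c :=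
  eHSq_ne_top_iff.1 (ne_top_of_le_ne_top (eHSq_ne_top_iff.2 hc) (eHSq_mono h c))

lemma FinH.hSq_mono {s r : ℝ} (h : s ≤ r) {c : Coef} (hc : FinH r c) : hSq s c ≤ hSq r c := by
  rw [← toReal_eHSq, ← toReal_eHSq]
  exact ENNReal.toReal_mono (eHSq_ne_top_iff.2 hc) (eHSq_mono h c)

lemma FinH.hN_mono {s r : ℝ} (h : s ≤ r) {c : Coef} (hc : FinH r c) : hN s c ≤ hN r c :=
  Real.sqrt_le_sqrt (hc.hSq_mono h)

lemma eHSq_neg (s : ℝ) (c : Coef) : eHSq s (-c) = eHSq s c := by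
  simp only [eHSq, Pi.neg_apply, norm_neg]

lemma eHSq_add_le (s : ℝ) (c d : Coef) : eHSq s (c + d) ≤ 2 * (eHSq s c + eHSq s d) := by
  simp only [eHSq, ← ENNReal.tsum_add, ← ENNReal.tsum_mul_left]
  refine ENNReal.tsum_le_tsum fun k => ?_
  rw [← ENNReal.ofReal_add (lam_rpow_mul_norm_sq_nonneg s c k) (lam_rpow_mul_norm_sq_nonneg s d k),
    ← ENNReal.ofReal_ofNat, ← ENNReal.ofReal_mul zero_le_two, ← mul_add, mul_left_comm]
  refine ENNReal.ofReal_le_ofReal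
    (mul_le_mul_of_nonneg_left ?_ (Real.rpow_nonneg (lam_pos k).le s))
  calc ‖c k + d k‖ ^ 2 ≤ (‖c k‖ + ‖d k‖) ^ 2 := by gcongr; exact norm_add_le _ _
    _ ≤ 2 * (‖c k‖ ^ 2 + ‖d k‖ ^ 2) := add_sq_le

lemma eHSq_sub_le (s : ℝ) (c d : Coef) : eHSq s (c - d) ≤ 2 * (eHSq s c + eHSq s d) := by
  rw [sub_eq_add_neg, ← eHSq_neg s d]
  exact eHSq_add_le s c (-d)

lemma FinH.sub {s : ℝ} {c d : Coef} (hc : FinH s c) (hd : FinH s d) : FinH s (c - d) := by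
  rw [← eHSq_ne_top_iff] at *
  exact ne_top_of_le_ne_top (by finiteness) (eHSq_sub_le s c d)

end SobolevScale

section Nonlinearity

open scoped ENNReal NNReal

/-- The length `2π|n|` of the wave vector `2πn`. -/
def waveNumber (n : ℤ × ℤ) : ℝ := √(latLam n)

/-- The dot product of the wave vectors `2πm` and `2πn`. -/
def waveDot (m n : ℤ × ℤ) : ℝ := 4 * Real.pi ^ 2 * ((m.1 : ℝ) * n.1 + (m.2 : ℝ) * n.2)

/-- The cross product of the wave vectors `2πn` and `2πm`, that is, the dot product of `2πn` with
the rotated vector `2π(m₂, −m₁)`. -/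
def waveCross (m n : ℤ × ℤ) : ℝ := 4 * Real.pi ^ 2 * ((m.2 : ℝ) * n.1 - (m.1 : ℝ) * n.2)

lemma waveNumber_nonneg (n : ℤ × ℤ) : 0 ≤ waveNumber n := Real.sqrt_nonneg _

lemma waveNumber_sq (n : ℤ × ℤ) : waveNumber n ^ 2 = latLam n := Real.sq_sqrt (latLam_nonneg n)

lemma waveNumber_neg (n : ℤ × ℤ) : waveNumber (-n) = waveNumber n := by
  rw [waveNumber, latLam_neg, waveNumber]

lemma waveNumber_pos {n : ℤ × ℤ} (hn : n ≠ 0) : 0 < waveNumber n := Real.sqrt_pos.2 (latLam_pos hn)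

lemma waveNumber_freq (k : Freq) : waveNumber k.1 = 2 * Real.pi * √(knormSq k) := by
  rw [waveNumber, show latLam k.1 = (2 * Real.pi) ^ 2 * knormSq k by
    simp only [latLam, knormSq]; ring, Real.sqrt_mul (sq_nonneg _), Real.sqrt_sq (by positivity)]

lemma ofReal_waveNumber (n : ℤ × ℤ) : ENNReal.ofReal (waveNumber n) = weight (1 / 2) n := by
  obtain rfl | hn := eq_or_ne n 0
  · simp [waveNumber, latLam]
  · rw [weight_of_ne_zero _ hn, waveNumber, Real.sqrt_eq_rpow]

lemma waveDot_sq_add_waveCross_sq (m n : ℤ × ℤ) :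
    waveDot m n ^ 2 + waveCross m n ^ 2 = (waveNumber m * waveNumber n) ^ 2 := by
  rw [mul_pow, waveNumber_sq, waveNumber_sq, waveDot, waveCross, latLam, latLam]
  ring

lemma abs_waveDot_le (m n : ℤ × ℤ) : |waveDot m n| ≤ waveNumber m * waveNumber n :=
  abs_le_of_sq_le_sq (by linarith [waveDot_sq_add_waveCross_sq m n, sq_nonneg (waveCross m n)])
    (mul_nonneg (waveNumber_nonneg m) (waveNumber_nonneg n))

lemma abs_waveCross_le (m n : ℤ × ℤ) : |waveCross m n| ≤ waveNumber m * waveNumber n :=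
  abs_le_of_sq_le_sq (by linarith [waveDot_sq_add_waveCross_sq m n, sq_nonneg (waveDot m n)])
    (mul_nonneg (waveNumber_nonneg m) (waveNumber_nonneg n))

/-- The symbol `2π (e_m · n)(e_n · e_k)`, `n = k - m`, of the bilinear map `Bc`. It vanishes for
`m = 0` and `m = k` because division by zero gives `0`. -/
def transportSymbol (k m : ℤ × ℤ) : ℝ :=
  waveCross m k / waveNumber m * (waveDot (k - m) k / (waveNumber (k - m) * waveNumber k))

lemma abs_transportSymbol_le (k m : ℤ × ℤ) : |transportSymbol k m| ≤ waveNumber k := by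
  have hcross : |waveCross m k / waveNumber m| ≤ waveNumber k := by
    rw [abs_div, abs_of_nonneg (waveNumber_nonneg m)]
    exact div_le_of_le_mul₀ (waveNumber_nonneg m) (waveNumber_nonneg k)
      (mul_comm (waveNumber m) _ ▸ abs_waveCross_le m k)
  have hdot : |waveDot (k - m) k / (waveNumber (k - m) * waveNumber k)| ≤ 1 := by
    have hpos := mul_nonneg (waveNumber_nonneg (k - m)) (waveNumber_nonneg k)
    rw [abs_div, abs_of_nonneg hpos]
    exact div_le_one_of_le₀ (abs_waveDot_le _ _) hpos
  rw [transportSymbol, abs_mul]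
  exact (mul_le_mul hcross hdot (abs_nonneg _) (waveNumber_nonneg k)).trans_eq (mul_one _)

lemma two_pi_mul_dotR_mul_dotR (k m n : Freq) (hn : n.1 = k.1 - m.1) :
    2 * Real.pi * (dotR (evec m) (fvec n) * dotR (evec n) (evec k)) =
      transportSymbol k.1 m.1 := by
  have hcross : 2 * Real.pi * dotR (evec m) (fvec n) = waveCross m.1 k.1 / waveNumber m.1 := by
    simp only [waveNumber_freq, waveCross, dotR, evec, fvec, hn, Prod.fst_sub, Prod.snd_sub,
      Int.cast_sub]
    field_simp
    ring
  have hdot : dotR (evec n) (evec k) = waveDot n.1 k.1 / (waveNumber n.1 * waveNumber k.1) := by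
    simp only [waveNumber_freq, waveDot, dotR, evec]
    field_simp
    ring
  rw [← mul_assoc, hcross, hdot, transportSymbol, hn]

lemma Bc_eq_tsum (c d : Coef) (k : Freq) :
    Bc c d k = Complex.I *
      ∑' m, latCoef c m * latCoef d (k.1 - m) * (transportSymbol k.1 m : ℂ) := by
  rw [Bc, ← tsum_freq (by simp), mul_comm ((2 * Real.pi : ℝ) : ℂ), mul_assoc, ← tsum_mul_left]
  congr 1
  refine tsum_congr fun m => ?_
  by_cases h : k.1 - m.1 = 0
  · simp [h]
  · rw [dif_pos h, latCoef_freq, ← two_pi_mul_dotR_mul_dotR k m ⟨k.1 - m.1, h⟩ rfl,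
      show latCoef d (k.1 - m.1) = d ⟨k.1 - m.1, h⟩ from dif_pos h]
    push_cast
    ring

lemma enorm_Bc_le (c d : Coef) (k : Freq) :
    ‖Bc c d k‖ₑ ≤ weight (1 / 2) k.1 * seqConv (‖latCoef c ·‖ₑ) (‖latCoef d ·‖ₑ) k.1 := by
  have hI : ‖Complex.I‖ₑ = 1 := by rw [← ofReal_norm, Complex.norm_I, ENNReal.ofReal_one]
  rw [Bc_eq_tsum, enorm_mul, hI, one_mul, seqConv, ← ENNReal.tsum_mul_left]
  refine enorm_tsum_le_tsum_enorm.trans (ENNReal.tsum_le_tsum fun m => ?_)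
  rw [enorm_mul, enorm_mul, mul_comm, ← ofReal_norm (transportSymbol k.1 m : ℂ),
    Complex.norm_real, ← ofReal_waveNumber]
  gcongr
  exact abs_transportSymbol_le k.1 m

lemma eHSq_Bc_le_sobSq (α : ℝ) (c d : Coef) :
    eHSq (α - 1) (Bc c d) ≤ sobSq α (seqConv (‖latCoef c ·‖ₑ) (‖latCoef d ·‖ₑ)) := by
  rw [eHSq_eq_sobSq, ← sub_add_cancel α 1, ← mul_one_div_cancel (two_ne_zero' ℝ),
    ← sobSq_weight_mul, add_sub_cancel_right]
  refine sobSq_mono_right _ fun n => ?_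
  obtain rfl | hn := eq_or_ne n 0
  · simp
  · exact (latCoef_freq (Bc c d) ⟨n, hn⟩).symm ▸ enorm_Bc_le c d ⟨n, hn⟩

lemma exists_eHSq_Bc_le {α s r : ℝ} (hs : max α 0 ≤ s) (hr : max α 0 ≤ r)
    (h : 1 + max α 0 < s + r) :
    ∃ K : ℝ≥0, ∀ c d : Coef, eHSq (α - 1) (Bc c d) ≤ K * (eHSq s c * eHSq r d) := by
  obtain ⟨K, hK⟩ := exists_sobSq_seqConv_le hs hr h
  refine ⟨K, fun c d => (eHSq_Bc_le_sobSq α c d).trans ?_⟩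
  rw [eHSq_eq_sobSq, eHSq_eq_sobSq]
  exact hK _ _ (by simp) (by simp)

/-- The size, coefficient by coefficient, of the `Ḣ^a` pairing of `d` with the linearization
`B[c, d] + B[d, c]` of the nonlinearity at `c`. -/
def linPairing (a : ℝ) (c d : Coef) : ℝ≥0∞ :=
  ∑' k : Freq, ENNReal.ofReal (lam k ^ a * (‖d k‖ * ‖Bc c d k + Bc d c k‖))

lemma linPairing_le (a : ℝ) (c d : Coef) :
    linPairing a c d ≤ 2 * ∑' k, weight (a + 1 / 2) k *
      (‖latCoef d k‖ₑ * seqConv (‖latCoef c ·‖ₑ) (‖latCoef d ·‖ₑ) k) := by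
  rw [linPairing, ← tsum_freq (by simp), ← ENNReal.tsum_mul_left]
  refine ENNReal.tsum_le_tsum fun k => ?_
  have hB : ‖Bc c d k + Bc d c k‖ₑ ≤
      2 * (weight (1 / 2) k.1 * seqConv (‖latCoef c ·‖ₑ) (‖latCoef d ·‖ₑ) k.1) := by
    rw [two_mul]
    refine (enorm_add_le _ _).trans (add_le_add (enorm_Bc_le c d k) ?_)
    rw [seqConv_comm]
    exact enorm_Bc_le d c k
  calc ENNReal.ofReal (lam k ^ a * (‖d k‖ * ‖Bc c d k + Bc d c k‖))
      = weight a k.1 * (‖d k‖ₑ * ‖Bc c d k + Bc d c k‖ₑ) := by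
        rw [ENNReal.ofReal_mul (Real.rpow_nonneg (lam_pos k).le a),
          ENNReal.ofReal_mul (norm_nonneg _), ofReal_norm, ofReal_norm, weight_freq]
    _ ≤ weight a k.1 * (‖d k‖ₑ * (2 *
          (weight (1 / 2) k.1 * seqConv (‖latCoef c ·‖ₑ) (‖latCoef d ·‖ₑ) k.1))) := by gcongr
    _ = _ := by rw [← weight_mul_apply, latCoef_freq]; ring

lemma exists_linPairing_sq_le (a : ℝ) :
    ∃ K : ℝ≥0, ∀ c d : Coef, IsReal c →
      linPairing a c d ^ 2 ≤ K * (eHSq (max |a| 1) c * eHSq (a + 1) d ^ 2) := by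
  obtain ⟨K, hK⟩ := exists_sq_tsum_weight_mul_seqConv_le a
  refine ⟨2 ^ 2 * K, fun c d hc => (pow_le_pow_left' (linPairing_le a c d) 2).trans ?_⟩
  rw [mul_pow, ENNReal.coe_mul, mul_assoc, eHSq_eq_sobSq, eHSq_eq_sobSq]
  push_cast
  gcongr
  exact hK _ _ (by simp) (by simp) (enorm_latCoef_neg hc)

lemma exists_linPairing_le (a : ℝ) (M : ℝ≥0) :
    ∃ L : ℝ≥0, ∀ c d : Coef, IsReal c → eHSq (max |a| 1) c ≤ M →
      linPairing a c d ≤ L * eHSq (a + 1) d := by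
  obtain ⟨K, hK⟩ := exists_linPairing_sq_le a
  refine ⟨NNReal.sqrt (K * M), fun c d hc hM => (ENNReal.pow_le_pow_left_iff two_ne_zero).1 ?_⟩
  calc linPairing a c d ^ 2 ≤ K * (M * eHSq (a + 1) d ^ 2) := (hK c d hc).trans (by gcongr)
    _ = (NNReal.sqrt (K * M) * eHSq (a + 1) d) ^ 2 := by
        rw [mul_pow, ← ENNReal.coe_pow, NNReal.sq_sqrt, ENNReal.coe_mul, mul_assoc]

end Nonlinearity

section EnstrophyCancellation

open scoped ENNReal NNReal

lemma hasSum_zero_of_comp_equiv_eq_neg {ι : Type*} {f : ι → ℂ} (hf : Summable f) (e : ι ≃ ι)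
    (he : ∀ i, f (e i) = -f i) : HasSum f 0 := by
  have hneg : -∑' i, f i = ∑' i, f i := by
    rw [← tsum_neg, ← e.tsum_eq f]
    exact tsum_congr fun i => (he i).symm
  exact CharZero.neg_eq_self_iff.1 hneg ▸ hf.hasSum

/-- Fourier coefficients of the stream function, up to a unimodular constant. -/
def streamCoef (c : Coef) (n : ℤ × ℤ) : ℂ := latCoef c n / (waveNumber n : ℂ)

lemma enorm_streamCoef_mul_weight (c : Coef) (n : ℤ × ℤ) :
    ‖streamCoef c n‖ₑ * weight (1 / 2) n = ‖latCoef c n‖ₑ := by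
  obtain rfl | hn := eq_or_ne n 0
  · simp
  · rw [← ofReal_waveNumber, ← ofReal_norm, ← ENNReal.ofReal_mul (norm_nonneg _), streamCoef,
      norm_div, Complex.norm_real, Real.norm_of_nonneg (waveNumber_nonneg n),
      div_mul_cancel₀ _ (waveNumber_pos hn).ne', ofReal_norm]

/-- Terms of a cubic form in the stream function, with symbol `σ`, over the triads `(-k, m, k - m)`
of frequencies with sum zero; the pair `(k, m)` is the index. -/
def triadTerm (c : Coef) (σ : ℤ × ℤ → ℤ × ℤ → ℝ) (p : (ℤ × ℤ) × (ℤ × ℤ)) : ℂ :=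
  streamCoef c (-p.1) * streamCoef c p.2 * streamCoef c (p.1 - p.2) * (σ p.1 p.2 : ℂ)

/-- The symbol of `∫ (u · ∇ω) ω`, where `ω` is the vorticity of `u`. -/
def vorticityTransportSymbol (k m : ℤ × ℤ) : ℝ := latLam k * latLam (k - m) * waveCross m k

/-- The symbol of `∫ (curl ((u · ∇)u) - u · ∇ω) ω`. -/
def vortexStretchingSymbol (k m : ℤ × ℤ) : ℝ := latLam k * waveCross m k * waveDot (k - m) m

lemma vorticityTransportSymbol_add_vortexStretchingSymbol (k m : ℤ × ℤ) :
    vorticityTransportSymbol k m + vortexStretchingSymbol k m =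
      latLam k * waveCross m k * waveDot (k - m) k := by
  have hdot : latLam (k - m) + waveDot (k - m) m = waveDot (k - m) k := by
    simp only [latLam, waveDot, Prod.fst_sub, Prod.snd_sub, Int.cast_sub]
    ring
  rw [← hdot, vorticityTransportSymbol, vortexStretchingSymbol]
  ring

/-- The involution of the triads which exchanges `m` and `k - m`. -/
def triadSwapAdvecting : (ℤ × ℤ) × (ℤ × ℤ) ≃ (ℤ × ℤ) × (ℤ × ℤ) where
  toFun p := (p.1, p.1 - p.2)
  invFun p := (p.1, p.1 - p.2)
  left_inv p := by simp
  right_inv p := by simp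

/-- The involution of the triads which exchanges `-k` and `k - m`. -/
def triadSwapTest : (ℤ × ℤ) × (ℤ × ℤ) ≃ (ℤ × ℤ) × (ℤ × ℤ) where
  toFun p := (p.2 - p.1, p.2)
  invFun p := (p.2 - p.1, p.2)
  left_inv p := by simp
  right_inv p := by simp

lemma triadTerm_swapTest (c : Coef) (p : (ℤ × ℤ) × (ℤ × ℤ)) :
    triadTerm c vorticityTransportSymbol (triadSwapTest p) =
      -triadTerm c vorticityTransportSymbol p := by
  obtain ⟨k, m⟩ := p
  have hσ : vorticityTransportSymbol (m - k) m = -vorticityTransportSymbol k m := by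
    rw [vorticityTransportSymbol, vorticityTransportSymbol, sub_sub_cancel_left, latLam_neg,
      ← neg_sub k m, latLam_neg, waveCross, waveCross, Prod.fst_neg, Prod.snd_neg, Prod.fst_sub,
      Prod.snd_sub]
    push_cast
    ring
  simp only [triadTerm, triadSwapTest, Equiv.coe_fn_mk, hσ, neg_sub, sub_sub_cancel_left,
    Complex.ofReal_neg]
  ring

lemma triadTerm_swapAdvecting (c : Coef) (p : (ℤ × ℤ) × (ℤ × ℤ)) :
    triadTerm c vortexStretchingSymbol (triadSwapAdvecting p) =
      -triadTerm c vortexStretchingSymbol p := by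
  obtain ⟨k, m⟩ := p
  have hσ : vortexStretchingSymbol k (k - m) = -vortexStretchingSymbol k m := by
    simp only [vortexStretchingSymbol, sub_sub_cancel, waveCross, waveDot, Prod.fst_sub,
      Prod.snd_sub, Int.cast_sub]
    ring
  simp only [triadTerm, triadSwapAdvecting, Equiv.coe_fn_mk, hσ, sub_sub_cancel,
    Complex.ofReal_neg]
  ring

lemma abs_vorticityTransportSymbol_le (k m : ℤ × ℤ) : |vorticityTransportSymbol k m| ≤
    waveNumber k ^ 3 * waveNumber m * waveNumber (k - m) ^ 2 := by
  rw [vorticityTransportSymbol, abs_mul, abs_of_nonneg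
    (mul_nonneg (latLam_nonneg _) (latLam_nonneg _)), ← waveNumber_sq, ← waveNumber_sq]
  calc waveNumber k ^ 2 * waveNumber (k - m) ^ 2 * |waveCross m k|
      ≤ waveNumber k ^ 2 * waveNumber (k - m) ^ 2 * (waveNumber m * waveNumber k) := by
        gcongr; exact abs_waveCross_le m k
    _ = waveNumber k ^ 3 * waveNumber m * waveNumber (k - m) ^ 2 := by ring

lemma abs_vortexStretchingSymbol_le (k m : ℤ × ℤ) : |vortexStretchingSymbol k m| ≤
    waveNumber k ^ 3 * waveNumber m * waveNumber (k - m) ^ 2 := by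
  have hcross : |waveCross m k| ≤ waveNumber (k - m) * waveNumber k := by
    have h : waveCross (k - m) k = -waveCross m k := by
      simp only [waveCross, Prod.fst_sub, Prod.snd_sub, Int.cast_sub]; ring
    rw [← abs_neg, ← h]
    exact abs_waveCross_le _ _
  have hk := waveNumber_nonneg k
  have hkm := waveNumber_nonneg (k - m)
  rw [vortexStretchingSymbol, abs_mul, abs_mul, abs_of_nonneg (latLam_nonneg _), ← waveNumber_sq]
  calc waveNumber k ^ 2 * |waveCross m k| * |waveDot (k - m) m|
      ≤ waveNumber k ^ 2 * (waveNumber (k - m) * waveNumber k) *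
          (waveNumber (k - m) * waveNumber m) := by
        gcongr; exact abs_waveDot_le _ _
    _ = waveNumber k ^ 3 * waveNumber m * waveNumber (k - m) ^ 2 := by ring

lemma enorm_triadTerm_le {c : Coef} (hc : IsReal c) {σ : ℤ × ℤ → ℤ × ℤ → ℝ} {k m : ℤ × ℤ}
    (hσ : |σ k m| ≤ waveNumber k ^ 3 * waveNumber m * waveNumber (k - m) ^ 2) :
    ‖triadTerm c σ (k, m)‖ₑ ≤ weight 1 k * (‖latCoef c k‖ₑ *
      (‖latCoef c m‖ₑ * (weight (1 / 2) (k - m) * ‖latCoef c (k - m)‖ₑ))) := by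
  have henorm : ‖(σ k m : ℂ)‖ₑ ≤
      weight (1 / 2) k ^ 3 * weight (1 / 2) m * weight (1 / 2) (k - m) ^ 2 := by
    rw [← ofReal_norm, Complex.norm_real, Real.norm_eq_abs]
    refine (ENNReal.ofReal_le_ofReal hσ).trans_eq ?_
    have hk := waveNumber_nonneg k
    have hm := waveNumber_nonneg m
    rw [ENNReal.ofReal_mul (by positivity), ENNReal.ofReal_mul (by positivity),
      ENNReal.ofReal_pow hk, ENNReal.ofReal_pow (waveNumber_nonneg _)]
    simp only [ofReal_waveNumber]
  have hweight : weight 1 k = weight (1 / 2) k ^ 2 := (congrFun (weight_half_sq 1) k).symm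
  have hstream : ‖streamCoef c (-k)‖ₑ * weight (1 / 2) k = ‖latCoef c k‖ₑ := by
    rw [← enorm_latCoef_neg hc, ← enorm_streamCoef_mul_weight, ← ofReal_waveNumber (-k),
      waveNumber_neg, ofReal_waveNumber]
  simp only [triadTerm, enorm_mul]
  refine (mul_le_mul_right henorm _).trans_eq ?_
  rw [hweight, ← hstream, ← enorm_streamCoef_mul_weight c m,
    ← enorm_streamCoef_mul_weight c (k - m)]
  ring

lemma summable_triadTerm {c : Coef} (hreal : IsReal c) (hc : FinH 2 c)
    {σ : ℤ × ℤ → ℤ × ℤ → ℝ}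
    (hσ : ∀ k m, |σ k m| ≤ waveNumber k ^ 3 * waveNumber m * waveNumber (k - m) ^ 2) :
    Summable (triadTerm c σ) := by
  set X : ℤ × ℤ → ℝ≥0∞ := (‖latCoef c ·‖ₑ)
  have hfin : sobSq 2 X ≠ ⊤ := eHSq_eq_sobSq 2 c ▸ eHSq_ne_top_iff.2 hc
  obtain ⟨K, hK⟩ := exists_sobSq_seqConv_le (α := 0) (s := 2) (r := 0) (by simp) (by simp)
    (by norm_num)
  have hsq : (∑' k, weight ((2 + 0) / 2) k * (X k * seqConv X (weight (1 / 2) * X) k)) ^ 2 ≤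
      sobSq 2 X * (K * (sobSq 2 X * sobSq 2 X)) := by
    refine (sq_tsum_weight_mul_le 2 0 _ _).trans ?_
    gcongr
    refine (hK X _ (by simp [X]) (by simp)).trans ?_
    rw [sobSq_weight_mul]
    gcongr
    exact sobSq_mono_left (by norm_num) X
  have hdom : ∑' p, ‖triadTerm c σ p‖ₑ ≤
      ∑' k, weight ((2 + 0) / 2) k * (X k * seqConv X (weight (1 / 2) * X) k) := by
    rw [ENNReal.tsum_prod']
    simp only [seqConv, ← ENNReal.tsum_mul_left, add_zero, div_self (two_ne_zero' ℝ)]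
    exact ENNReal.tsum_le_tsum fun k => ENNReal.tsum_le_tsum fun m =>
      enorm_triadTerm_le hreal (hσ k m)
  refine .of_enorm (ne_top_of_le_ne_top (fun h => ?_) hdom)
  rw [h] at hsq
  exact (by finiteness : sobSq 2 X * (K * (sobSq 2 X * sobSq 2 X)) ≠ ⊤) (top_unique hsq)

lemma lam_mul_conj_mul_Bc {c : Coef} (hc : IsReal c) (k : Freq) :
    (lam k : ℂ) * (starRingEnd ℂ (c k) * Bc c c k) =
      -Complex.I * ∑' m, (triadTerm c vorticityTransportSymbol (k.1, m) +
        triadTerm c vortexStretchingSymbol (k.1, m)) := by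
  have hconj : starRingEnd ℂ (c k) = -latCoef c (-k.1) := by
    rw [latCoef_neg hc, neg_neg, latCoef_freq]
  rw [Bc_eq_tsum, hconj, ← tsum_mul_left, ← tsum_mul_left, ← tsum_mul_left, ← tsum_mul_left]
  refine tsum_congr fun m => ?_
  rw [triadTerm, triadTerm, ← mul_add, ← Complex.ofReal_add,
    vorticityTransportSymbol_add_vortexStretchingSymbol, show lam k = latLam k.1 from rfl]
  simp only [streamCoef, transportSymbol, waveNumber_neg]
  push_cast
  simp only [div_eq_mul_inv, mul_inv]
  ring

lemma hasSum_lam_mul_inner_Bc {c : Coef} (hreal : IsReal c) (hc : FinH 2 c) :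
    HasSum (fun k : Freq => lam k * inner ℝ (c k) (Bc c c k)) 0 := by
  have hzero : HasSum (fun p => triadTerm c vorticityTransportSymbol p +
      triadTerm c vortexStretchingSymbol p) 0 := by
    simpa only [add_zero] using
      (hasSum_zero_of_comp_equiv_eq_neg
        (summable_triadTerm hreal hc abs_vorticityTransportSymbol_le) triadSwapTest
        (triadTerm_swapTest c)).add
      (hasSum_zero_of_comp_equiv_eq_neg
        (summable_triadTerm hreal hc abs_vortexStretchingSymbol_le) triadSwapAdvecting
        (triadTerm_swapAdvecting c))
  have hfiber := hzero.prod_fiberwise fun k => (hzero.summable.prod_factor k).hasSum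
  have hfreq : HasSum (fun k : Freq => ∑' m, (triadTerm c vorticityTransportSymbol (k.1, m) +
      triadTerm c vortexStretchingSymbol (k.1, m))) 0 :=
    (hasSum_subtype_iff_of_support_subset (s := {n : ℤ × ℤ | n ≠ 0})
      fun k hk h0 => hk (by simp [h0, triadTerm, streamCoef])).2 hfiber
  have hcomplex := (hfreq.mul_left (-Complex.I)).congr_fun (lam_mul_conj_mul_Bc hreal)
  rw [mul_zero] at hcomplex
  refine (Complex.hasSum_re hcomplex).congr_fun fun k => ?_
  rw [Complex.re_ofReal_mul, Complex.inner, mul_comm (Bc c c k)]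

end EnstrophyCancellation

section Truncation

open scoped ENNReal NNReal

/-- The squared `Ḣ^s` norm restricted to the frequencies in `F`. -/
def truncSq (s : ℝ) (F : Finset Freq) (c : Coef) : ℝ := ∑ k ∈ F, lam k ^ s * ‖c k‖ ^ 2

/-- The `Ḣ^s` inner product restricted to the frequencies in `F`. -/
def truncInner (s : ℝ) (F : Finset Freq) (c d : Coef) : ℝ :=
  ∑ k ∈ F, lam k ^ s * inner ℝ (c k) (d k)

lemma truncSq_nonneg (s : ℝ) (F : Finset Freq) (c : Coef) : 0 ≤ truncSq s F c :=
  Finset.sum_nonneg fun k _ => lam_rpow_mul_norm_sq_nonneg s c k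

lemma truncSq_mono {F F' : Finset Freq} (h : F ⊆ F') (s : ℝ) (c : Coef) :
    truncSq s F c ≤ truncSq s F' c :=
  Finset.sum_le_sum_of_subset_of_nonneg h fun k _ _ => lam_rpow_mul_norm_sq_nonneg s c k

lemma FinH.truncSq_le_hSq {s : ℝ} {c : Coef} (hc : FinH s c) (F : Finset Freq) :
    truncSq s F c ≤ hSq s c :=
  hc.sum_le_tsum F fun k _ => lam_rpow_mul_norm_sq_nonneg s c k

lemma ofReal_truncSq (s : ℝ) (F : Finset Freq) (c : Coef) :
    ENNReal.ofReal (truncSq s F c) = ∑ k ∈ F, ENNReal.ofReal (lam k ^ s * ‖c k‖ ^ 2) :=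
  ENNReal.ofReal_sum_of_nonneg fun k _ => lam_rpow_mul_norm_sq_nonneg s c k

lemma eHSq_eq_iSup_truncSq (s : ℝ) (c : Coef) :
    eHSq s c = ⨆ F, ENNReal.ofReal (truncSq s F c) := by
  simp only [ofReal_truncSq, eHSq, ENNReal.tsum_eq_iSup_sum]

lemma truncInner_sub_right (s : ℝ) (F : Finset Freq) (c d e : Coef) :
    truncInner s F c (d - e) = truncInner s F c d - truncInner s F c e := by
  simp only [truncInner, Pi.sub_apply, inner_sub_right, mul_sub, Finset.sum_sub_distrib]

lemma truncInner_neg_right (s : ℝ) (F : Finset Freq) (c d : Coef) :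
    truncInner s F c (-d) = -truncInner s F c d := by
  simp only [truncInner, Pi.neg_apply, inner_neg_right, mul_neg, Finset.sum_neg_distrib]

lemma truncInner_lam_mul (s ν : ℝ) (F : Finset Freq) (c : Coef) :
    truncInner s F c (fun k => ((ν * lam k : ℝ) : ℂ) * c k) = ν * truncSq (s + 1) F c := by
  rw [truncInner, truncSq, Finset.mul_sum]
  refine Finset.sum_congr rfl fun k _ => ?_
  rw [← Complex.real_smul, inner_smul_right, real_inner_self_eq_norm_sq,
    Real.rpow_add_one (lam_pos k).ne']
  ring

lemma two_mul_abs_truncInner_le {ε : ℝ} (hε : 0 < ε) (s : ℝ) (F : Finset Freq) (c d : Coef) :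
    2 * |truncInner s F c d| ≤ ε * truncSq (s + 1) F c + ε⁻¹ * truncSq (s - 1) F d := by
  simp only [truncSq, Finset.mul_sum, ← Finset.sum_add_distrib]
  refine (mul_le_mul_of_nonneg_left (Finset.abs_sum_le_sum_abs _ _) zero_le_two).trans ?_
  rw [Finset.mul_sum]
  refine Finset.sum_le_sum fun k _ => ?_
  have hlam := lam_pos k
  have hpow : 0 ≤ lam k ^ s := Real.rpow_nonneg hlam.le s
  rw [abs_mul, abs_of_nonneg hpow, Real.rpow_add_one hlam.ne', Real.rpow_sub_one hlam.ne']
  calc 2 * (lam k ^ s * |inner ℝ (c k) (d k)|)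
      ≤ lam k ^ s * (2 * ‖c k‖ * ‖d k‖) := by
        rw [mul_left_comm, mul_assoc 2]
        gcongr
        exact abs_real_inner_le_norm _ _
    _ ≤ lam k ^ s * (ε * lam k * ‖c k‖ ^ 2 + (ε * lam k)⁻¹ * ‖d k‖ ^ 2) := by
        gcongr
        exact two_mul_le_add_mul_sq (by positivity)
    _ = _ := by rw [mul_inv]; ring

lemma continuousOn_truncSq {u : ℝ → Coef} {S : Set ℝ} (hu : ∀ k, ContinuousOn (u · k) S) (s : ℝ)
    (F : Finset Freq) : ContinuousOn (fun t => truncSq s F (u t)) S :=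
  continuousOn_finsetSum _ fun k _ => continuousOn_const.mul ((hu k).norm.pow 2)

lemma hasDerivAt_truncSq {u : ℝ → Coef} {v : Coef} {t : ℝ}
    (h : ∀ k, HasDerivAt (u · k) (v k) t) (s : ℝ) (F : Finset Freq) :
    HasDerivAt (fun τ => truncSq s F (u τ)) (2 * truncInner s F (u t) v) t := by
  rw [truncInner, Finset.mul_sum]
  simp only [mul_left_comm (2 : ℝ)]
  exact .fun_sum fun k _ => (h k).norm_sq.const_mul _

lemma aestronglyMeasurable_truncInner {α : Type*} [MeasurableSpace α] {μ : Measure α}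
    {u v : α → Coef} (hu : ∀ k, AEStronglyMeasurable (u · k) μ)
    (hv : ∀ k, AEStronglyMeasurable (v · k) μ) (s : ℝ) (F : Finset Freq) :
    AEStronglyMeasurable (fun t => truncInner s F (u t) (v t)) μ :=
  Finset.aestronglyMeasurable_fun_sum _ fun k _ => ((hu k).inner (hv k)).const_mul _

lemma aemeasurable_ofReal_lam_rpow_mul_norm_sq {α : Type*} [MeasurableSpace α]
    {μ : Measure α} {u : α → Coef} (hu : ∀ k, AEStronglyMeasurable (u · k) μ) (s : ℝ) (k : Freq) :
    AEMeasurable (fun t => ENNReal.ofReal (lam k ^ s * ‖u t k‖ ^ 2)) μ :=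
  (((hu k).norm.aemeasurable.pow_const 2).const_mul _).ennreal_ofReal

lemma aemeasurable_eHSq {α : Type*} [MeasurableSpace α] {μ : Measure α} {u : α → Coef}
    (hu : ∀ k, AEStronglyMeasurable (u · k) μ) (s : ℝ) : AEMeasurable (fun t => eHSq s (u t)) μ :=
  .tsum (aemeasurable_ofReal_lam_rpow_mul_norm_sq hu s)

end Truncation

section ContinuousTrajectories

open scoped ENNReal NNReal

lemma FinH.sqrt_mul_norm_le_hN {s : ℝ} {c : Coef} (hc : FinH s c) (k : Freq) :
    √(lam k ^ s) * ‖c k‖ ≤ hN s c := by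
  refine Real.le_sqrt_of_sq_le ?_
  rw [mul_pow, Real.sq_sqrt (Real.rpow_nonneg (lam_pos k).le s)]
  exact (Finset.sum_singleton _ k).symm.trans_le (hc.truncSq_le_hSq {k})

lemma ContH.continuousOn_coef {s T : ℝ} {u : ℝ → Coef} (hu : ContH s T u)
    (hfin : ∀ t ∈ Icc 0 T, FinH s (u t)) (k : Freq) : ContinuousOn (u · k) (Icc 0 T) := by
  rw [Metric.continuousOn_iff]
  intro t ht ε hε
  have hpos : 0 < √(lam k ^ s) := Real.sqrt_pos.2 (Real.rpow_pos_of_pos (lam_pos k) s)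
  obtain ⟨δ, hδ, hδε⟩ := hu t ht (√(lam k ^ s) * ε) (by positivity)
  refine ⟨δ, hδ, fun τ hτ hτt => ?_⟩
  rw [dist_eq_norm]
  exact lt_of_mul_lt_mul_left
    ((((hfin τ hτ).sub (hfin t ht)).sqrt_mul_norm_le_hN k).trans_lt (hδε τ hτ hτt)) hpos.le

lemma FinH.eHSq_le_of_hN_sub_lt {s ε : ℝ} {c d : Coef} (hc : FinH s c) (hd : FinH s d)
    (h : hN s (c - d) < ε) : eHSq s c ≤ 2 * (ENNReal.ofReal (ε ^ 2) + eHSq s d) := by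
  have hε : 0 < ε := (Real.sqrt_nonneg _).trans_lt h
  have hsub : eHSq s (c - d) ≤ ENNReal.ofReal (ε ^ 2) := by
    rw [(hc.sub hd).eHSq_eq]
    exact ENNReal.ofReal_le_ofReal ((Real.sqrt_lt' hε).1 h).le
  calc eHSq s c = eHSq s (c - d + d) := by rw [sub_add_cancel]
    _ ≤ 2 * (eHSq s (c - d) + eHSq s d) := eHSq_add_le s _ _
    _ ≤ 2 * (ENNReal.ofReal (ε ^ 2) + eHSq s d) := by gcongr

lemma ContH.exists_eHSq_le {s T : ℝ} {u : ℝ → Coef} (hu : ContH s T u)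
    (hfin : ∀ t ∈ Icc 0 T, FinH s (u t)) : ∃ M : ℝ≥0, ∀ t ∈ Icc 0 T, eHSq s (u t) ≤ M := by
  refine (isCompact_Icc (a := (0 : ℝ)) (b := T)).induction_on
    (p := fun S => ∃ M : ℝ≥0, ∀ t ∈ S, eHSq s (u t) ≤ M) ⟨0, by simp⟩
    (fun _ _ hS ⟨M, hM⟩ => ⟨M, fun t ht => hM t (hS ht)⟩) ?_ fun t ht => ?_
  · rintro S S' ⟨M, hM⟩ ⟨M', hM'⟩
    refine ⟨max M M', ?_⟩
    rintro t (ht | ht)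
    · exact (hM t ht).trans (by simp)
    · exact (hM' t ht).trans (by simp)
  · obtain ⟨δ, hδ, hδu⟩ := hu t ht 1 one_pos
    have hfinite : 2 * (ENNReal.ofReal (1 ^ 2) + eHSq s (u t)) ≠ ⊤ := by
      have := eHSq_ne_top_iff.2 (hfin t ht)
      finiteness
    refine ⟨Icc 0 T ∩ Metric.ball t δ, inter_mem_nhdsWithin _ (Metric.ball_mem_nhds t hδ),
      (2 * (ENNReal.ofReal (1 ^ 2) + eHSq s (u t))).toNNReal, ?_⟩
    rintro τ ⟨hτ, hτt⟩
    rw [ENNReal.coe_toNNReal hfinite]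
    exact (hfin τ hτ).eHSq_le_of_hN_sub_lt (hfin t ht) (hδu τ hτ hτt)

end ContinuousTrajectories

section EnergyEstimates

open scoped ENNReal NNReal

lemma sub_le_integral_of_hasDerivAt_of_ae_le {g g' φ : ℝ → ℝ} {a b : ℝ} (hab : a ≤ b)
    (hcont : ContinuousOn g (Icc a b)) (hderiv : ∀ x ∈ Ioo a b, HasDerivAt g (g' x) x)
    (hφ : IntegrableOn φ (Ioc a b)) (hle : ∀ᵐ x ∂volume.restrict (Ioc a b), g' x ≤ φ x) :
    g b - g a ≤ ∫ x in Ioc a b, φ x := by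
  have hae : (fun x => max (φ x) (g' x)) =ᵐ[volume.restrict (Ioc a b)] φ :=
    hle.mono fun x hx => max_eq_left hx
  have hint : IntegrableOn (fun x => max (φ x) (g' x)) (Icc a b) :=
    (integrableOn_Icc_iff_integrableOn_Ioc).2 (hφ.congr hae.symm)
  refine (intervalIntegral.sub_le_integral_of_hasDeriv_right_of_le hab hcont
    (fun x hx => (hderiv x hx).hasDerivWithinAt) hint fun x _ => le_max_right _ _).trans_eq ?_
  rw [intervalIntegral.integral_of_le hab]
  exact integral_congr_ae hae

/-- `u` solves the forced heat equation `du/dt - νΔu = G` on `(0, T]`, coefficient by coefficient,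
and its coefficients are continuous up to `t = 0`. -/
structure IsForcedHeatSol (ν T : ℝ) (G u : ℝ → Coef) : Prop where
  continuousOn : ∀ k, ContinuousOn (u · k) (Icc 0 T)
  hasDerivAt : ∀ k, ∀ t ∈ Ioc 0 T, HasDerivAt (u · k) (G t k - ((ν * lam k : ℝ) : ℂ) * u t k) t

namespace IsForcedHeatSol

variable {ν T : ℝ} {G u : ℝ → Coef} (hu : IsForcedHeatSol ν T G u)
include hu

lemma aestronglyMeasurable (k : Freq) :
    AEStronglyMeasurable (u · k) (volume.restrict (Ioc 0 T)) :=
  ((hu.continuousOn k).mono Ioc_subset_Icc_self).aestronglyMeasurable measurableSet_Ioc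

-- No regularity of `G` in time is assumed: its measurability is inherited from the
-- derivative of `u`.
lemma aestronglyMeasurable_force (k : Freq) :
    AEStronglyMeasurable (G · k) (volume.restrict (Ioc 0 T)) := by
  refine ((measurable_deriv (u · k)).aestronglyMeasurable.add
    ((hu.aestronglyMeasurable k).const_mul ((ν * lam k : ℝ) : ℂ))).congr ?_
  filter_upwards [ae_restrict_mem measurableSet_Ioc] with t ht
  rw [Pi.add_apply, (hu.hasDerivAt k t ht).deriv, sub_add_cancel]

lemma integrableOn_truncSq (s : ℝ) (F : Finset Freq) :
    IntegrableOn (fun t => truncSq s F (u t)) (Ioc 0 T) :=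
  (continuousOn_truncSq hu.continuousOn s F).integrableOn_Icc.mono_set Ioc_subset_Icc_self

lemma hasDerivAt_truncSq (s : ℝ) (F : Finset Freq) {t : ℝ} (ht : t ∈ Ioc 0 T) :
    HasDerivAt (fun τ => truncSq s F (u τ))
      (2 * (truncInner s F (u t) (G t) - ν * truncSq (s + 1) F (u t))) t := by
  rw [← truncInner_lam_mul, ← truncInner_sub_right]
  exact NS2D.hasDerivAt_truncSq (fun k => hu.hasDerivAt k t ht) s F

lemma truncSq_add_integral_le (hT : 0 ≤ T) (s : ℝ) (F : Finset Freq) {ψ : ℝ → ℝ}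
    (hψ : IntegrableOn ψ (Ioc 0 T))
    (hle : ∀ᵐ t ∂volume.restrict (Ioc 0 T),
      2 * truncInner s F (u t) (G t) ≤ ν * truncSq (s + 1) F (u t) + ψ t) :
    truncSq s F (u T) + ν * ∫ t in Ioc 0 T, truncSq (s + 1) F (u t) ≤
      truncSq s F (u 0) + ∫ t in Ioc 0 T, ψ t := by
  have hint := (hu.integrableOn_truncSq (s + 1) F).const_mul ν
  have h := sub_le_integral_of_hasDerivAt_of_ae_le (φ := fun t => ψ t - ν * truncSq (s + 1) F (u t))
    hT (continuousOn_truncSq hu.continuousOn s F)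
    (fun t ht => hu.hasDerivAt_truncSq s F (Ioo_subset_Ioc_self ht)) (hψ.sub hint)
    (hle.mono fun t ht => by linarith)
  rw [integral_sub hψ hint, integral_const_mul] at h
  linarith

lemma lintegral_eHSq_le_of_forall_truncSq_le {s M : ℝ}
    (h : ∀ F, ∫ t in Ioc 0 T, truncSq s F (u t) ≤ M) :
    ∫⁻ t in Ioc 0 T, eHSq s (u t) ≤ ENNReal.ofReal M := by
  have hmeas := aemeasurable_ofReal_lam_rpow_mul_norm_sq hu.aestronglyMeasurable s
  simp only [eHSq]
  rw [lintegral_tsum hmeas, ENNReal.tsum_eq_iSup_sum]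
  refine iSup_le fun F => ?_
  rw [← lintegral_finsetSum' _ fun k _ => hmeas k]
  simp only [← ofReal_truncSq]
  rw [← ofReal_integral_eq_lintegral_ofReal (hu.integrableOn_truncSq s F)
    (ae_of_all _ fun t => truncSq_nonneg s F (u t))]
  exact ENNReal.ofReal_le_ofReal (h F)

lemma eHSq_le_and_lintegral_le (hν : 0 < ν) (hT : 0 ≤ T) {s M : ℝ}
    (h : ∀ F, ∀ t ∈ Icc 0 T,
      truncSq s F (u t) + ν * ∫ τ in Ioc 0 t, truncSq (s + 1) F (u τ) ≤ M) :
    (∀ t ∈ Icc 0 T, eHSq s (u t) ≤ ENNReal.ofReal M) ∧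
      ∫⁻ t in Ioc 0 T, eHSq (s + 1) (u t) ≤ ENNReal.ofReal (M / ν) := by
  refine ⟨fun t ht => ?_, hu.lintegral_eHSq_le_of_forall_truncSq_le fun F => ?_⟩
  · rw [eHSq_eq_iSup_truncSq]
    refine iSup_le fun F => ENNReal.ofReal_le_ofReal ?_
    have hint : 0 ≤ ν * ∫ τ in Ioc 0 t, truncSq (s + 1) F (u τ) :=
      mul_nonneg hν.le (integral_nonneg fun τ => truncSq_nonneg _ _ _)
    linarith [h F t ht]
  · rw [le_div_iff₀' hν]
    linarith [h F T ⟨hT, le_rfl⟩, truncSq_nonneg s F (u T)]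

lemma truncSq_add_integral_le_of_lintegral_force_le (hν : 0 < ν) (hT : 0 ≤ T) {s : ℝ} {R : ℝ≥0}
    (hG : ∫⁻ t in Ioc 0 T, eHSq (s - 1) (G t) ≤ R) (F : Finset Freq) :
    truncSq s F (u T) + ν * ∫ t in Ioc 0 T, truncSq (s + 1) F (u t) ≤
      truncSq s F (u 0) + ν⁻¹ * R := by
  have hmeas := aemeasurable_eHSq hu.aestronglyMeasurable_force (s - 1)
  have htop := ne_top_of_le_ne_top ENNReal.coe_ne_top hG
  have hint := integrable_toReal_of_lintegral_ne_top hmeas htop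
  refine (hu.truncSq_add_integral_le hT s F (hint.const_mul ν⁻¹) ?_).trans ?_
  · filter_upwards [ae_lt_top' hmeas htop] with t ht
    have hfin : truncSq (s - 1) F (G t) ≤ (eHSq (s - 1) (G t)).toReal := by
      rw [toReal_eHSq]
      exact (eHSq_ne_top_iff.1 ht.ne).truncSq_le_hSq F
    calc 2 * truncInner s F (u t) (G t) ≤ 2 * |truncInner s F (u t) (G t)| := by
          gcongr; exact le_abs_self _
      _ ≤ ν * truncSq (s + 1) F (u t) + ν⁻¹ * truncSq (s - 1) F (G t) :=
          two_mul_abs_truncInner_le hν s F _ _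
      _ ≤ _ := by gcongr
  · rw [integral_const_mul, integral_toReal hmeas (ae_lt_top' hmeas htop)]
    gcongr
    exact ENNReal.toReal_le_coe_of_le_coe hG

end IsForcedHeatSol

end EnergyEstimates

section Trajectories

lemma MemL2H.mono {s T t : ℝ} {u : ℝ → Coef} (hu : MemL2H s T u) (ht : t ≤ T) : MemL2H s t u :=
  ⟨fun τ hτ => hu.1 τ (Ioc_subset_Ioc_right ht hτ), hu.2.mono_set (Ioc_subset_Ioc_right ht)⟩

lemma MemL2H.finH {r s T : ℝ} {u : ℝ → Coef} (hu : MemL2H s T u) (hrs : r ≤ s)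
    (h0 : FinH r (u 0)) {t : ℝ} (ht : t ∈ Icc 0 T) : FinH r (u t) := by
  obtain rfl | hpos := ht.1.eq_or_lt
  · exact h0
  · exact (hu.1 t ⟨hpos, ht.2⟩).2.mono hrs

end Trajectories

section EnstrophyBalance

open Filter Topology
open scoped ENNReal NNReal

lemma tendsto_two_mul_abs_truncInner_one_Bc {c : Coef} (hreal : IsReal c) (hc : FinH 2 c) :
    Tendsto (fun F => 2 * |truncInner 1 F c (Bc c c)|) atTop (𝓝 0) := by
  have h : Tendsto (fun F => truncInner 1 F c (Bc c c)) atTop (𝓝 0) := by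
    simp only [truncInner, Real.rpow_one]
    exact hasSum_lam_mul_inner_Bc hreal hc
  simpa only [abs_zero, mul_zero] using h.abs.const_mul 2

lemma two_mul_abs_truncInner_one_Bc_le {c : Coef} {K : ℝ≥0} (hc : FinH 2 c)
    (hK : eHSq 0 (Bc c c) ≤ K * eHSq 2 c) (F : Finset Freq) :
    2 * |truncInner 1 F c (Bc c c)| ≤ (1 + K) * hSq 2 c := by
  have htop : K * eHSq 2 c ≠ ⊤ := ENNReal.mul_ne_top ENNReal.coe_ne_top (eHSq_ne_top_iff.2 hc)
  have hBfin : FinH 0 (Bc c c) := eHSq_ne_top_iff.1 (ne_top_of_le_ne_top htop hK)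
  have hB : hSq 0 (Bc c c) ≤ K * hSq 2 c := by
    have h := ENNReal.toReal_mono htop hK
    rwa [ENNReal.toReal_mul, toReal_eHSq, toReal_eHSq, ENNReal.coe_toReal] at h
  have hyoung := two_mul_abs_truncInner_le one_pos 1 F c (Bc c c)
  rw [one_add_one_eq_two, sub_self, inv_one, one_mul, one_mul] at hyoung
  linarith [hc.truncSq_le_hSq F, hBfin.truncSq_le_hSq F]

namespace IsNSSol

variable {ν T : ℝ} {f θ : Coef} {u : ℝ → Coef} (hu : IsNSSol ν f T θ u)
include hu

lemma mono {t : ℝ} (ht : t ≤ T) : IsNSSol ν f t θ u where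
  init := hu.init
  real τ hτ := hu.real τ (Icc_subset_Icc_right ht hτ)
  deriv k τ hτ := hu.deriv k τ (Ioc_subset_Ioc_right ht hτ)
  contH1 τ hτ ε hε := by
    obtain ⟨δ, hδ, h⟩ := hu.contH1 τ (Icc_subset_Icc_right ht hτ) ε hε
    exact ⟨δ, hδ, fun σ hσ => h σ (Icc_subset_Icc_right ht hσ)⟩
  memL2H2 := hu.memL2H2.mono ht

variable (hθ : FinH 1 θ)
include hθ

lemma finH_one {t : ℝ} (ht : t ∈ Icc 0 T) : FinH 1 (u t) :=
  hu.memL2H2.finH one_le_two (hu.init.symm ▸ hθ) ht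

lemma isForcedHeatSol : IsForcedHeatSol ν T (fun t => f - Bc (u t) (u t)) u where
  continuousOn := hu.contH1.continuousOn_coef fun _ => hu.finH_one hθ
  hasDerivAt k t ht := sub_right_comm (f k) _ _ ▸ hu.deriv k t ht

lemma aestronglyMeasurable_Bc (k : Freq) :
    AEStronglyMeasurable (fun t => Bc (u t) (u t) k) (volume.restrict (Ioc 0 T)) := by
  simpa only [Pi.sub_apply, Pi.sub_def, sub_sub_cancel] using
    (aestronglyMeasurable_const (b := f k)).sub
      ((hu.isForcedHeatSol hθ).aestronglyMeasurable_force k)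

lemma aestronglyMeasurable_two_mul_abs_truncInner_Bc (s : ℝ) (F : Finset Freq) :
    AEStronglyMeasurable (fun t => 2 * |truncInner s F (u t) (Bc (u t) (u t))|)
      (volume.restrict (Ioc 0 T)) :=
  (aestronglyMeasurable_truncInner (hu.isForcedHeatSol hθ).aestronglyMeasurable
    (hu.aestronglyMeasurable_Bc hθ) s F).norm.const_mul 2

lemma exists_two_mul_abs_truncInner_one_Bc_le :
    ∃ C : ℝ, ∀ t ∈ Ioc 0 T, ∀ F,
      2 * |truncInner 1 F (u t) (Bc (u t) (u t))| ≤ C * hSq 2 (u t) := by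
  obtain ⟨M, hM⟩ := hu.contH1.exists_eHSq_le fun _ => hu.finH_one hθ
  obtain ⟨K, hK⟩ := exists_eHSq_Bc_le (α := 1) (s := 1) (r := 2) (by simp) (by simp) (by norm_num)
  refine ⟨1 + (K * M : ℝ≥0), fun t ht =>
    two_mul_abs_truncInner_one_Bc_le (hu.memL2H2.1 t ht).2 ?_⟩
  rw [← sub_self (1 : ℝ), ENNReal.coe_mul, mul_assoc]
  refine (hK _ _).trans ?_
  gcongr
  exact hM t (Ioc_subset_Icc_self ht)

lemma integrableOn_two_mul_abs_truncInner_one_Bc (F : Finset Freq) :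
    IntegrableOn (fun t => 2 * |truncInner 1 F (u t) (Bc (u t) (u t))|) (Ioc 0 T) := by
  obtain ⟨C, hC⟩ := hu.exists_two_mul_abs_truncInner_one_Bc_le hθ
  refine (hu.memL2H2.2.const_mul C).mono'
    (hu.aestronglyMeasurable_two_mul_abs_truncInner_Bc hθ 1 F) ?_
  filter_upwards [ae_restrict_mem measurableSet_Ioc] with t ht
  rw [Real.norm_of_nonneg (by positivity)]
  exact hC t ht F

lemma tendsto_integral_two_mul_abs_truncInner_one_Bc :
    Tendsto (fun F => ∫ t in Ioc 0 T, 2 * |truncInner 1 F (u t) (Bc (u t) (u t))|)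
      atTop (𝓝 0) := by
  obtain ⟨C, hC⟩ := hu.exists_two_mul_abs_truncInner_one_Bc_le hθ
  rw [show 𝓝 (0 : ℝ) = 𝓝 (∫ _ in Ioc 0 T, 0) by rw [integral_zero]]
  refine tendsto_integral_filter_of_dominated_convergence (l := (atTop : Filter (Finset Freq)))
    (fun t => C * hSq 2 (u t))
    (.of_forall (hu.aestronglyMeasurable_two_mul_abs_truncInner_Bc hθ 1)) (.of_forall fun F => ?_)
    (hu.memL2H2.2.const_mul C) ?_
  all_goals filter_upwards [ae_restrict_mem measurableSet_Ioc] with t ht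
  · rw [Real.norm_of_nonneg (by positivity)]
    exact hC t ht F
  · exact tendsto_two_mul_abs_truncInner_one_Bc (hu.memL2H2.1 t ht).1 (hu.memL2H2.1 t ht).2

variable (hν : 0 < ν) (hT : 0 ≤ T) (hf : FinH 0 f)
include hν hT hf

lemma truncSq_one_add_integral_le_add_error (F : Finset Freq) :
    truncSq 1 F (u T) + ν * ∫ t in Ioc 0 T, truncSq 2 F (u t) ≤ hSq 1 θ + T * (ν⁻¹ * hSq 0 f) +
      ∫ t in Ioc 0 T, 2 * |truncInner 1 F (u t) (Bc (u t) (u t))| := by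
  have hint := hu.integrableOn_two_mul_abs_truncInner_one_Bc hθ F
  have hconst : IntegrableOn (fun _ : ℝ => ν⁻¹ * hSq 0 f) (Ioc 0 T) := integrableOn_const (by simp)
  have henergy := (hu.isForcedHeatSol hθ).truncSq_add_integral_le hT 1 F (hconst.add hint) ?_
  · rw [one_add_one_eq_two, hu.init, integral_add' hconst hint, setIntegral_const,
      Real.volume_real_Ioc_of_le hT, sub_zero, smul_eq_mul] at henergy
    linarith [hθ.truncSq_le_hSq F]
  · refine .of_forall fun t => ?_
    have hyoung := two_mul_abs_truncInner_le hν 1 F (u t) f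
    have hforce : ν⁻¹ * truncSq 0 F f ≤ ν⁻¹ * hSq 0 f := by
      gcongr
      exact hf.truncSq_le_hSq F
    rw [sub_self] at hyoung
    rw [truncInner_sub_right, Pi.add_apply]
    linarith [le_abs_self (truncInner 1 F (u t) f),
      neg_le_abs (truncInner 1 F (u t) (Bc (u t) (u t)))]

-- The truncated enstrophy production does not vanish for any fixed `F`, only in the limit.
lemma truncSq_one_add_integral_le (F : Finset Freq) :
    truncSq 1 F (u T) + ν * ∫ t in Ioc 0 T, truncSq 2 F (u t) ≤
      hSq 1 θ + T * (ν⁻¹ * hSq 0 f) := by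
  have hlim := (hu.tendsto_integral_two_mul_abs_truncInner_one_Bc hθ).const_add
    (hSq 1 θ + T * (ν⁻¹ * hSq 0 f))
  rw [add_zero] at hlim
  refine ge_of_tendsto hlim ?_
  filter_upwards [eventually_ge_atTop F] with F' hF
  refine le_trans ?_ (hu.truncSq_one_add_integral_le_add_error hθ hν hT hf F')
  have hheat := hu.isForcedHeatSol hθ
  gcongr ?_ + ν * ?_
  · exact truncSq_mono hF 1 _
  · exact integral_mono (hheat.integrableOn_truncSq 2 F) (hheat.integrableOn_truncSq 2 F')
      fun t => truncSq_mono hF 2 _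

end IsNSSol

end EnstrophyBalance

section AprioriBounds

open scoped ENNReal NNReal

/-- A bound in `C([0,T], Ḣ^r) ∩ L²([0,T], Ḣ^{r+1})` for the Navier–Stokes solutions with initial
value in a ball of `Ḣ^r`, uniform over that ball; `B` bounds the squared norm. -/
def HasAprioriBound (ν T : ℝ) (f : Coef) (B : ℝ≥0) (r : ℝ) : Prop :=
  ∃ M : ℝ≥0, ∀ θ u, eHSq r θ ≤ B → IsNSSol ν f T θ u →
    (∀ t ∈ Icc 0 T, eHSq r (u t) ≤ M) ∧ ∫⁻ t in Ioc 0 T, eHSq (r + 1) (u t) ≤ M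

variable {ν T : ℝ} {f : Coef} {B : ℝ≥0}

lemma truncSq_le_of_eHSq_le {s : ℝ} {c : Coef} {M : ℝ≥0} (h : eHSq s c ≤ M) (F : Finset Freq) :
    truncSq s F c ≤ M := by
  rw [eHSq_eq_iSup_truncSq] at h
  exact ENNReal.ofReal_le_coe.1 ((le_iSup _ F).trans h)

lemma hasAprioriBound_of_truncSq_add_integral_le (hν : 0 < ν) (hT : 0 ≤ T) {r : ℝ} (hr : 1 ≤ r)
    {M : ℝ} (h : ∀ θ u, eHSq r θ ≤ B → IsNSSol ν f T θ u → ∀ t ∈ Icc 0 T, ∀ F,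
      truncSq r F (u t) + ν * ∫ τ in Ioc 0 t, truncSq (r + 1) F (u τ) ≤ M) :
    HasAprioriBound ν T f B r := by
  refine ⟨M.toNNReal + (M / ν).toNNReal, fun θ u hθ hu => ?_⟩
  have hθ1 : FinH 1 θ := (eHSq_ne_top_iff.1 (ne_top_of_le_ne_top ENNReal.coe_ne_top hθ)).mono hr
  obtain ⟨hsup, hint⟩ := (hu.isForcedHeatSol hθ1).eHSq_le_and_lintegral_le hν hT
    fun F t ht => h θ u hθ hu t ht F
  rw [ENNReal.coe_add]
  exact ⟨fun t ht => (hsup t ht).trans le_self_add, hint.trans le_add_self⟩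

lemma hasAprioriBound_one (hν : 0 < ν) (hT : 0 ≤ T) (hf : FinH 0 f) :
    HasAprioriBound ν T f B 1 := by
  refine hasAprioriBound_of_truncSq_add_integral_le (M := B + T * (ν⁻¹ * hSq 0 f)) hν hT le_rfl
    fun θ u hθ hu t ht F => ?_
  have hθ1 : FinH 1 θ := eHSq_ne_top_iff.1 (ne_top_of_le_ne_top ENNReal.coe_ne_top hθ)
  have hθB : hSq 1 θ ≤ B := toReal_eHSq 1 θ ▸ ENNReal.toReal_le_coe_of_le_coe hθ
  have hf0 : 0 ≤ ν⁻¹ * hSq 0 f := mul_nonneg (by positivity) (hSq_nonneg 0 f)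
  rw [one_add_one_eq_two]
  refine ((hu.mono ht.2).truncSq_one_add_integral_le hθ1 hν ht.1 hf F).trans ?_
  gcongr
  exact ht.2

lemma exists_eHSq_Bc_self_le {ρ r : ℝ} (hρ : 1 ≤ ρ) (hr : r ≤ ρ + 1 / 2) :
    ∃ K : ℝ≥0, ∀ c, eHSq (r - 1) (Bc c c) ≤ K * (eHSq ρ c * eHSq (ρ + 1) c) := by
  have hmax : max r 0 ≤ ρ + 1 / 2 := max_le hr (by linarith)
  obtain ⟨K, hK⟩ := exists_eHSq_Bc_le hmax hmax (by linarith)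
  refine ⟨K, fun c => (hK c c).trans ?_⟩
  refine mul_le_mul_right ?_ _
  rw [← sq, show ρ + 1 / 2 = (ρ + (ρ + 1)) / 2 by ring]
  simp only [eHSq_eq_sobSq]
  exact sobSq_sq_le_mul _ _ _

lemma lintegral_eHSq_sub_Bc_self_le {u : ℝ → Coef} {ρ s : ℝ} {K M : ℝ≥0}
    (hK : ∀ c, eHSq s (Bc c c) ≤ K * (eHSq ρ c * eHSq (ρ + 1) c))
    (hsup : ∀ t ∈ Icc 0 T, eHSq ρ (u t) ≤ M) (hint : ∫⁻ t in Ioc 0 T, eHSq (ρ + 1) (u t) ≤ M) :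
    ∫⁻ t in Ioc 0 T, eHSq s (f - Bc (u t) (u t)) ≤
      2 * (eHSq s f * ENNReal.ofReal T + K * M * M) := by
  calc ∫⁻ t in Ioc 0 T, eHSq s (f - Bc (u t) (u t))
      ≤ ∫⁻ t in Ioc 0 T, 2 * (eHSq s f + K * M * eHSq (ρ + 1) (u t)) := by
        refine setLIntegral_mono' measurableSet_Ioc fun t ht => (eHSq_sub_le s _ _).trans ?_
        gcongr
        rw [mul_assoc]
        refine (hK _).trans ?_
        gcongr
        exact hsup t (Ioc_subset_Icc_self ht)
    _ = 2 * (eHSq s f * ENNReal.ofReal T + K * M * ∫⁻ t in Ioc 0 T, eHSq (ρ + 1) (u t)) := by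
        rw [lintegral_const_mul' _ _ (by finiteness), lintegral_add_left measurable_const,
          setLIntegral_const, Real.volume_Ioc, sub_zero, lintegral_const_mul' _ _ (by finiteness)]
    _ ≤ _ := by gcongr

-- Half a derivative is gained because `B[u,u]` is controlled in `L²([0,T], Ḣ^{r-1})` by the bounds
-- on `u` in `Ḣ^ρ` and `L²([0,T], Ḣ^{ρ+1})`, which interpolate to `L⁴([0,T], Ḣ^{ρ+1/2})`.
lemma HasAprioriBound.of_le_add_half {ρ r : ℝ} (h : HasAprioriBound ν T f B ρ) (hρ : 1 ≤ ρ)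
    (hρr : ρ ≤ r) (hr : r ≤ ρ + 1 / 2) (hν : 0 < ν) (hT : 0 ≤ T) (hf : FinH (r - 1) f) :
    HasAprioriBound ν T f B r := by
  obtain ⟨M, hM⟩ := h
  obtain ⟨K, hK⟩ := exists_eHSq_Bc_self_le hρ hr
  have hf' := eHSq_ne_top_iff.2 hf
  obtain ⟨R, hR⟩ : ∃ R : ℝ≥0, R = 2 * (eHSq (r - 1) f * ENNReal.ofReal T + K * M * M) :=
    ⟨_, ENNReal.coe_toNNReal (by finiteness)⟩
  refine hasAprioriBound_of_truncSq_add_integral_le (M := B + ν⁻¹ * R) hν hT (hρ.trans hρr)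
    fun θ u hθ hu t ht F => ?_
  obtain ⟨hsup, hint⟩ := hM θ u ((eHSq_mono hρr θ).trans hθ) hu
  have hθ1 : FinH 1 θ :=
    (eHSq_ne_top_iff.1 (ne_top_of_le_ne_top ENNReal.coe_ne_top hθ)).mono (hρ.trans hρr)
  have hforce : ∫⁻ τ in Ioc 0 t, eHSq (r - 1) (f - Bc (u τ) (u τ)) ≤ R :=
    (lintegral_mono_set (Ioc_subset_Ioc_right ht.2)).trans
      ((lintegral_eHSq_sub_Bc_self_le hK hsup hint).trans hR.ge)
  refine (((hu.mono ht.2).isForcedHeatSol hθ1).truncSq_add_integral_le_of_lintegral_force_le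
    hν ht.1 hforce F).trans ?_
  gcongr
  exact truncSq_le_of_eHSq_le (hu.init.symm ▸ hθ) F

lemma hasAprioriBound_of_le_one_add_nat_div_two (hν : 0 < ν) (hT : 0 ≤ T) (n : ℕ) {r : ℝ}
    (hr : 1 ≤ r) (hrn : r ≤ 1 + n / 2) (hf : FinH (r - 1) f) : HasAprioriBound ν T f B r := by
  induction n generalizing r with
  | zero =>
    obtain rfl : r = 1 := le_antisymm (by simpa using hrn) hr
    exact hasAprioriBound_one hν hT (sub_self (1 : ℝ) ▸ hf)
  | succ n ih =>
    rw [Nat.cast_succ] at hrn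
    have hρr : max 1 (r - 1 / 2) ≤ r := max_le hr (by linarith)
    have hρ : HasAprioriBound ν T f B (max 1 (r - 1 / 2)) :=
      ih (le_max_left _ _) (max_le (by linarith [n.cast_nonneg (α := ℝ)]) (by linarith))
        (hf.mono (by linarith))
    have hrρ : r ≤ max 1 (r - 1 / 2) + 1 / 2 := by linarith [le_max_right 1 (r - 1 / 2)]
    exact hρ.of_le_add_half (le_max_left _ _) hρr hrρ hν hT hf

theorem hasAprioriBound (hν : 0 < ν) (hT : 0 ≤ T) {r : ℝ} (hr : 1 ≤ r) (hf : FinH (r - 1) f) :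
    HasAprioriBound ν T f B r := by
  obtain ⟨n, hn⟩ := exists_nat_ge (2 * r)
  exact hasAprioriBound_of_le_one_add_nat_div_two hν hT n hr (by linarith) hf

end AprioriBounds

section LinearStability

open scoped ENNReal NNReal

lemma ofReal_abs_truncInner_le_linPairing (a : ℝ) (F : Finset Freq) (c d : Coef) :
    ENNReal.ofReal |truncInner a F d (Bc c d + Bc d c)| ≤ linPairing a c d := by
  have hnonneg (k : Freq) : 0 ≤ lam k ^ a := Real.rpow_nonneg (lam_pos k).le a
  calc ENNReal.ofReal |truncInner a F d (Bc c d + Bc d c)|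
      ≤ ENNReal.ofReal (∑ k ∈ F, lam k ^ a * (‖d k‖ * ‖Bc c d k + Bc d c k‖)) := by
        refine ENNReal.ofReal_le_ofReal ((Finset.abs_sum_le_sum_abs _ _).trans ?_)
        refine Finset.sum_le_sum fun k _ => ?_
        rw [abs_mul, abs_of_nonneg (hnonneg k)]
        exact mul_le_mul_of_nonneg_left (abs_real_inner_le_norm _ _) (hnonneg k)
    _ = ∑ k ∈ F, ENNReal.ofReal (lam k ^ a * (‖d k‖ * ‖Bc c d k + Bc d c k‖)) :=
        ENNReal.ofReal_sum_of_nonneg fun k _ => mul_nonneg (hnonneg k) (by positivity)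
    _ ≤ linPairing a c d := ENNReal.sum_le_tsum F

lemma abs_truncInner_le_of_linPairing_le {a : ℝ} {c d : Coef} {L : ℝ≥0} (hd : FinH (a + 1) d)
    (h : linPairing a c d ≤ L * eHSq (a + 1) d) (F : Finset Freq) :
    |truncInner a F d (Bc c d + Bc d c)| ≤ L * hSq (a + 1) d := by
  have hle := (ofReal_abs_truncInner_le_linPairing a F c d).trans h
  rwa [← toReal_eHSq, ← ENNReal.coe_toReal L, ← ENNReal.toReal_mul,
    ← ENNReal.ofReal_le_iff_le_toReal
      (ENNReal.mul_ne_top ENNReal.coe_ne_top (eHSq_ne_top_iff.2 hd))]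

namespace IsForcedHeatSol

variable {ν T s L : ℝ} {G u : ℝ → Coef} (hu : IsForcedHeatSol ν T G u)
include hu

lemma mono {t : ℝ} (ht : t ≤ T) : IsForcedHeatSol ν t G u where
  continuousOn k := (hu.continuousOn k).mono (Icc_subset_Icc_right ht)
  hasDerivAt k τ hτ := hu.hasDerivAt k τ (Ioc_subset_Ioc_right ht hτ)

variable (hν : 0 ≤ ν) (hfin : ∀ t ∈ Ioc 0 T, FinH (s + 1) (u t))
  (hint : IntegrableOn (fun t => hSq (s + 1) (u t)) (Ioc 0 T))
  (hG : ∀ t ∈ Ioc 0 T, ∀ F, |truncInner s F (u t) (G t)| ≤ L * hSq (s + 1) (u t))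
include hν hfin hint hG

lemma truncSq_zero_le_truncSq_add_integral (hT : 0 ≤ T) (F : Finset Freq) :
    truncSq s F (u 0) ≤
      truncSq s F (u T) + 2 * (ν + L) * ∫ t in Ioc 0 T, hSq (s + 1) (u t) := by
  have h := sub_le_integral_of_hasDerivAt_of_ae_le (g := fun t => -truncSq s F (u t))
    (φ := fun t => 2 * (ν + L) * hSq (s + 1) (u t)) hT
    (continuousOn_truncSq hu.continuousOn s F).neg
    (fun t ht => (hu.hasDerivAt_truncSq s F (Ioo_subset_Ioc_self ht)).neg)
    (hint.const_mul _) ?_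
  · rw [integral_const_mul] at h
    linarith
  · filter_upwards [ae_restrict_mem measurableSet_Ioc] with t ht
    have hdiss := mul_le_mul_of_nonneg_left ((hfin t ht).truncSq_le_hSq F) hν
    linarith [neg_le_abs (truncInner s F (u t) (G t)), hG t ht F]

lemma truncSq_zero_le_hSq_add_integral (hL : 0 ≤ L) (F : Finset Freq) {t : ℝ} (ht : t ∈ Ioc 0 T) :
    truncSq s F (u 0) ≤
      hSq (s + 1) (u t) + 2 * (ν + L) * ∫ τ in Ioc 0 T, hSq (s + 1) (u τ) := by
  have hsub : Ioc 0 t ⊆ Ioc 0 T := Ioc_subset_Ioc_right ht.2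
  refine ((hu.mono ht.2).truncSq_zero_le_truncSq_add_integral hν (fun τ hτ => hfin τ (hsub hτ))
    (hint.mono_set hsub) (fun τ hτ => hG τ (hsub hτ)) ht.1.le F).trans ?_
  gcongr ?_ + _ * ?_
  · have hs : s ≤ s + 1 := by linarith
    exact (((hfin t ht).mono hs).truncSq_le_hSq F).trans ((hfin t ht).hSq_mono hs)
  · exact setIntegral_mono_set hint (.of_forall fun τ => hSq_nonneg _ _) (.of_forall hsub)

-- Energy can only leave the low modes at rate `2 (ν + L) ‖u‖²_{s+1}`; averaging the resulting bound
-- over the final time trades `‖u(t)‖²_{s+1}`, which is not bounded pointwise, for its integral.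
lemma hSq_zero_le_mul_integral (hL : 0 ≤ L) (hT : 0 < T) :
    hSq s (u 0) ≤ (1 / T + 2 * (ν + L)) * ∫ t in Ioc 0 T, hSq (s + 1) (u t) := by
  set I := ∫ t in Ioc 0 T, hSq (s + 1) (u t) with hI
  have hconst (x : ℝ) : IntegrableOn (fun _ => x) (Ioc 0 T) := integrableOn_const (by simp)
  refine Real.tsum_le_of_sum_le (lam_rpow_mul_norm_sq_nonneg s (u 0)) fun F => ?_
  have havg : ∫ _ in Ioc 0 T, truncSq s F (u 0) ≤
      ∫ t in Ioc 0 T, (hSq (s + 1) (u t) + 2 * (ν + L) * I) :=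
    setIntegral_mono_on (hconst _) (hint.add (hconst _)) measurableSet_Ioc fun t ht =>
      hu.truncSq_zero_le_hSq_add_integral hν hfin hint hG hL F ht
  rw [integral_add hint (hconst _), setIntegral_const, setIntegral_const,
    Real.volume_real_Ioc_of_le hT.le, sub_zero, smul_eq_mul, smul_eq_mul, ← hI] at havg
  calc truncSq s F (u 0) ≤ (I + T * (2 * (ν + L) * I)) / T := (le_div_iff₀' hT).2 havg
    _ = (1 / T + 2 * (ν + L)) * I := by field_simp

end IsForcedHeatSol

lemma IsLinSol.isForcedHeatSol {a ν T : ℝ} {u U : ℝ → Coef} {ξ : Coef} (hU : IsLinSol ν u T ξ U)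
    (hcont : ContH a T U) (hfin : ∀ t ∈ Icc 0 T, FinH a (U t)) :
    IsForcedHeatSol ν T (fun t => -(Bc (u t) (U t) + Bc (U t) (u t))) U where
  continuousOn := hcont.continuousOn_coef hfin
  hasDerivAt k t ht := by
    convert hU.deriv k t ht using 1
    simp only [Pi.neg_apply, Pi.add_apply, Pi.zero_apply]
    ring

lemma IsLinSol.hSq_le_mul_integral {a ν T : ℝ} {u U : ℝ → Coef} {ξ : Coef}
    (hU : IsLinSol ν u T ξ U) (hν : 0 ≤ ν) (hT : 0 < T) (hξ : FinH a ξ) (hcont : ContH a T U)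
    (hmem : MemL2H (a + 1) T U) {L : ℝ≥0}
    (hL : ∀ t ∈ Ioc 0 T, linPairing a (u t) (U t) ≤ L * eHSq (a + 1) (U t)) :
    hSq a ξ ≤ (1 / T + 2 * (ν + L)) * ∫ t in (0 : ℝ)..T, hSq (a + 1) (U t) := by
  have hinit : U 0 = ξ := hU.init
  have hheat := hU.isForcedHeatSol hcont
    fun t => hmem.finH (by linarith : a ≤ a + 1) (hinit.symm ▸ hξ)
  have hforce (t : ℝ) (ht : t ∈ Ioc 0 T) (F : Finset Freq) :
      |truncInner a F (U t) (-(Bc (u t) (U t) + Bc (U t) (u t)))| ≤ L * hSq (a + 1) (U t) := by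
    rw [truncInner_neg_right, abs_neg]
    exact abs_truncInner_le_of_linPairing_le (hmem.1 t ht).2 (hL t ht) F
  rw [← hinit, intervalIntegral.integral_of_le hT.le]
  exact hheat.hSq_zero_le_mul_integral hν (fun t ht => (hmem.1 t ht).2) hmem.2 hforce L.2 hT

lemma eHSq_le_of_hN_le {s B : ℝ} {c : Coef} (hc : FinH s c) (h : hN s c ≤ B) :
    eHSq s c ≤ (B ^ 2).toNNReal := by
  rw [hc.eHSq_eq]
  exact ENNReal.ofReal_le_ofReal ((Real.sqrt_le_left ((Real.sqrt_nonneg _).trans h)).1 h)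

lemma max_abs_one_le_astar (a : ℤ) : max |(a : ℝ)| 1 ≤ astar a := by
  have h : max |a| 1 ≤ astar a := by grind [astar]
  exact_mod_cast h

end LinearStability

theorem statement7_general (a T ν : ℝ) (hT : 0 < T) (hν : 0 < ν)
    (f : Coef) (hf : FinH (max |a| 1 - 1) f) (B : ℝ) :
    ∃ C : ℝ, 0 < C ∧
      ∀ (θ : Coef) (uθ : ℝ → Coef), FinH (max |a| 1) θ →
        hN (max |a| 1) θ ≤ B → IsNSSol ν f T θ uθ →
        ∀ (ξ : Coef) (U : ℝ → Coef), FinH a ξ → IsLinSol ν uθ T ξ U →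
          ContH a T U → MemL2H (a + 1) T U →
          hSq a ξ ≤ C * ∫ t in (0:ℝ)..T, hSq (a + 1) (U t) := by
  obtain ⟨M, hM⟩ := hasAprioriBound (B := (B ^ 2).toNNReal) hν hT.le (le_max_right |a| 1) hf
  obtain ⟨L, hL⟩ := exists_linPairing_le a M
  refine ⟨1 / T + 2 * (ν + L), by positivity, fun θ u hθ hθB hu ξ U hξ hU hcont hmem => ?_⟩
  obtain ⟨hsup, -⟩ := hM θ u (eHSq_le_of_hN_le hθ hθB) hu
  exact hU.hSq_le_mul_integral hν.le hT hξ hcont hmem fun t ht =>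
    hL _ _ (hu.real t (Ioc_subset_Icc_self ht)) (hsup t (Ioc_subset_Icc_self ht))

/-- Proposition `PropLinStab`. Stability estimate for the
linearised Navier–Stokes flow: for `a ∈ ℤ` with `a* = |a|+1` if `|a| ≤ 1` and
`a* = |a|` if `|a| ≥ 2`, all `f ∈ Ḣ^{a*−1}_⋄` and `B > 0`, there exists
`C = C(ν,T,‖f‖_{Ḣ^{a*−1}},a,B) > 0` such that for all `θ ∈ Ḣ^{a*}_⋄` with
`‖θ‖_{Ḣ^{a*}} ≤ B` and all `ξ ∈ Ḣ^a_⋄`,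
`‖ξ‖²_{Ḣ^a} ≤ C ∫₀ᵀ ‖𝕀_θ[ξ](t)‖²_{Ḣ^{a+1}} dt`. -/
theorem statement7 (a : ℤ) (T ν : ℝ) (hT : 0 < T) (hν : 0 < ν)
    (f : Coef) (hf : MemH ((astar a : ℝ) - 1) f) (B : ℝ) (hB : 0 < B) :
    ∃ C : ℝ, 0 < C ∧
      ∀ (θ : Coef) (uθ : ℝ → Coef), MemH (astar a : ℝ) θ →
        hN (astar a : ℝ) θ ≤ B → IsNSSol ν f T θ uθ →
        ∀ (ξ : Coef) (U : ℝ → Coef), MemH (a : ℝ) ξ → IsLinSol ν uθ T ξ U →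
          ContH (a : ℝ) T U → MemL2H ((a : ℝ) + 1) T U →
          hSq (a : ℝ) ξ ≤ C * ∫ t in (0:ℝ)..T, hSq ((a : ℝ) + 1) (U t) := by
  have hle := max_abs_one_le_astar a
  obtain ⟨C, hC, h⟩ := statement7_general a T ν hT hν f (hf.2.mono (by linarith)) B
  exact ⟨C, hC, fun θ uθ hθ hθB hu ξ U hξ => h θ uθ (hθ.2.mono hle)
    ((hθ.2.hN_mono hle).trans hθB) hu ξ U hξ.2⟩

end NS2D
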